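/- arXiv:2108.11177 — 13 statements merged into one kernel-verified Lean document; each statement's English description precedes it below -/
import Mathlib

section
/- Fix k > 0 and suppose q_i ∈ [φ_m + η(k), φ_v]. Then on the interval [φ_m, q_i], the function q_c ↦ V_L(q_i, q_c) (extended by the value 0 at q_c = q_i) attains its maximum uniquely at q_c = q_i − η(k), and the maximum value equals τ_m(q_i, q_i − η(k)) = γ(2(q_i − φ_m) − η(k))·η(k) > 0. -/
/-!
Write `s = √(ξ/k) = 4γ(φv - φm)η`. The gap `τ_m - τ_v = 2γ(φv - φm)(q_i - q_c)` equals `s/2`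
exactly at `q_c = q_i - η`, where both arguments of the minimum defining `V_L` coincide with `τ_m`.
For `q_c` in `(q_i - η, q_i)` the payoff is at most `τ_m`, which is strictly decreasing in `q_c` on
`[φm, ∞)`. For `q_c < q_i - η` the gap exceeds `s/2`, so the inner maximum is `τ_v - s/2` and the
payoff is at most `τ_v + s/2`, which is strictly increasing in `q_c` on `(-∞, φv]`. Hence both sides
lie strictly below the value at `q_i - η`, which is positive because `q_i ≥ φm + η`.
-/

open Real Set Filter

noncomputable section

/-- Voter's threshold τ_v(q) = γ(2φ_v − q_c − q_i)(q_c − q_i). -/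
def tauV (φv γ qi qc : ℝ) : ℝ := γ * (2*φv - qc - qi) * (qc - qi)

/-- Outlet's threshold τ_m(q) = γ(2φ_m − q_c − q_i)(q_c − q_i). -/
def tauM (φm γ qi qc : ℝ) : ℝ := γ * (2*φm - qc - qi) * (qc - qi)

/-- Challenger's expected payoff from proposing q_c < q_i. -/
def VL (φm φv γ ξ k qi qc : ℝ) : ℝ :=
  min (max (tauV φv γ qi qc - (1/2) * Real.sqrt (ξ/k))
           (2 * tauV φv γ qi qc - tauM φm γ qi qc) + Real.sqrt (ξ/k))
      (tauM φm γ qi qc)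

/-- Challenger's expected payoff from proposing q_c > q_i. -/
def VR (φm φv γ ξ k qi qc : ℝ) : ℝ :=
  max (min (tauV φv γ qi qc + (1/2) * Real.sqrt (ξ/k))
           (2 * tauV φv γ qi qc - tauM φm γ qi qc) - Real.sqrt (ξ/k))
      (tauM φm γ qi qc)

/-- η(k) = √(ξ/k)/(4γ(φ_v − φ_m)). -/
def eta (φm φv γ ξ k : ℝ) : ℝ := Real.sqrt (ξ/k) / (4*γ*(φv-φm))

/-- The cost threshold k̄ = ξ/(γ²(φ_v − φ_m)⁴). -/
def kbar (φm φv γ ξ : ℝ) : ℝ := ξ / (γ^2 * (φv-φm)^4)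

/-- Incumbent's equilibrium policy q_i*(k). -/
def qistar (φm φv γ ξ k : ℝ) : ℝ :=
  if kbar φm φv γ ξ < k then φv + eta φm φv γ ξ k - (ξ/(γ^2*k)) ^ ((1:ℝ)/4)
  else if kbar φm φv γ ξ / 4 < k then (φv+φm)/2 - eta φm φv γ ξ k
  else φm

/-- Challenger's equilibrium policy q_c*(k). -/
def qcstar (φm φv γ ξ k : ℝ) : ℝ :=
  if kbar φm φv γ ξ < k then φv - (ξ/(γ^2*k)) ^ ((1:ℝ)/4) else φm

/-- Equilibrium endorsement cutoff τ_m*(k). -/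
def tauMstar (φm φv γ ξ k : ℝ) : ℝ :=
  tauM φm γ (qistar φm φv γ ξ k) (qcstar φm φv γ ξ k)

/-- The voter's equilibrium welfare W(k). -/
def W (φm φv γ ξ φ k : ℝ) : ℝ :=
  ((tauMstar φm φv γ ξ k + φ)/(2*φ)) * (-(γ * (φv - qcstar φm φv γ ξ k)^2))
  + ((φ - tauMstar φm φv γ ξ k)/(2*φ)) *
      (-(γ * (φv - qistar φm φv γ ξ k)^2) + (φ + tauMstar φm φv γ ξ k)/2)

/-- on [φ_m, q_i] with q_i ∈ [φ_m+η(k), φ_v], the challenger's payoff from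
undercutting (extended by 0 at q_c = q_i) is uniquely maximized at q_c = q_i − η(k),
with value τ_m(q_i, q_i − η(k)) = γ(2(q_i − φ_m) − η(k))η(k) > 0. -/
theorem stmt0 (φm φv γ ξ k : ℝ) (hφ : φm < φv) (hγ : 0 < γ) (hξ : 0 < ξ) (hk : 0 < k)
    (qi : ℝ) (hqi : qi ∈ Set.Icc (φm + eta φm φv γ ξ k) φv) :
    let F : ℝ → ℝ := fun qc => if qc = qi then 0 else VL φm φv γ ξ k qi qc;
    (qi - eta φm φv γ ξ k ∈ Set.Icc φm qi) ∧
    F (qi - eta φm φv γ ξ k) = tauM φm γ qi (qi - eta φm φv γ ξ k) ∧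
    tauM φm γ qi (qi - eta φm φv γ ξ k)
      = γ * (2*(qi - φm) - eta φm φv γ ξ k) * eta φm φv γ ξ k ∧
    0 < tauM φm γ qi (qi - eta φm φv γ ξ k) ∧
    (∀ qc ∈ Set.Icc φm qi, qc ≠ qi - eta φm φv γ ξ k →
      F qc < F (qi - eta φm φv γ ξ k)) := by
  intro F
  obtain ⟨hlo, hhi⟩ := hqi
  have hs : 0 < Real.sqrt (ξ / k) := Real.sqrt_pos.mpr (div_pos hξ hk)
  have hD : 0 < φv - φm := sub_pos.mpr hφ
  have hη : 0 < eta φm φv γ ξ k := div_pos hs (by positivity)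
  have hsη : Real.sqrt (ξ / k) = 4 * γ * (φv - φm) * eta φm φv γ ξ k := by
    unfold eta
    field_simp
  have hF : ∀ qc, qc ≠ qi → F qc = VL φm φv γ ξ k qi qc := fun qc h => if_neg h
  have hF0 : F qi = 0 := if_pos rfl
  clear_value F
  unfold VL at hF
  rw [hsη] at hF
  clear hsη hs
  generalize eta φm φv γ ξ k = η at *
  have hM : tauM φm γ qi (qi - η) = γ * (2 * (qi - φm) - η) * η := by
    unfold tauM
    ring
  have hpos : 0 < tauM φm γ qi (qi - η) := by
    rw [hM]
    exact mul_pos (mul_pos hγ (by linarith)) hη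
  have hgap : ∀ qc, tauM φm γ qi qc - tauV φv γ qi qc = 2 * γ * (φv - φm) * (qi - qc) := by
    intro qc
    unfold tauM tauV
    ring
  have hFη : F (qi - η) = tauM φm γ qi (qi - η) := by
    rw [hF _ (by linarith)]
    apply min_eq_right
    have h1 := hgap (qi - η)
    have h2 := le_max_left (tauV φv γ qi (qi - η) - 1 / 2 * (4 * γ * (φv - φm) * η))
      (2 * tauV φv γ qi (qi - η) - tauM φm γ qi (qi - η))
    linarith
  refine ⟨⟨by linarith, by linarith⟩, hFη, hM, hpos, ?_⟩
  rintro qc ⟨hqc, hqci⟩ hne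
  rw [hFη]
  rcases eq_or_ne qc qi with rfl | hqq
  · rwa [hF0]
  rw [hF _ hqq]
  rcases lt_or_gt_of_ne hne with hlt | hgt
  · -- Larger deviations: the first argument of the minimum binds, and `tauV` increases in `qc`.
    refine (min_le_left _ _).trans_lt ?_
    have h1 := hgap (qi - η)
    have h2 := hgap qc
    have h3 : 0 < γ * (φv - φm) * (qi - η - qc) :=
      mul_pos (mul_pos hγ hD) (by linarith)
    have h4 : 0 < tauV φv γ qi (qi - η) - tauV φv γ qi qc := by
      have h : tauV φv γ qi (qi - η) - tauV φv γ qi qc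
          = γ * ((qi - η - qc) * (2 * φv - qc - (qi - η))) := by
        unfold tauV
        ring
      rw [h]
      exact mul_pos hγ (mul_pos (by linarith) (by linarith))
    rw [max_eq_left (by linarith)]
    linarith
  · -- Smaller deviations: `tauM` bounds the payoff and decreases in `qc` to the right of `φm`.
    refine (min_le_right _ _).trans_lt ?_
    have h : tauM φm γ qi (qi - η) - tauM φm γ qi qc
        = γ * ((qc - (qi - η)) * (qc + (qi - η) - 2 * φm)) := by
      unfold tauM
      ring
    have h' : 0 < γ * ((qc - (qi - η)) * (qc + (qi - η) - 2 * φm)) :=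
      mul_pos hγ (mul_pos (by linarith) (by linarith))
    linarith


end
end

section
/- Fix k > 0 and suppose q_i ∈ [φ_m, φ_m + η(k)]. Then on the interval [φ_m, q_i], the function q_c ↦ V_L(q_i, q_c) (extended by the value 0 at q_c = q_i) attains its maximum at q_c = φ_m, with maximum value V_L(q_i, φ_m) = τ_m(q_i, φ_m) = γ(q_i − φ_m)². -/
/-! The payoff `VL` is a minimum one of whose terms is `τ_m`, so it never exceeds
`τ_m(q_i, q_c) = γ (q_i - φ_m)² - γ (q_c - φ_m)²`, which is at most `γ (q_i - φ_m)²`. This bound is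
reached at `q_c = φ_m`: since `τ_m - τ_v = 2γ (φ_v - φ_m)(q_i - φ_m)` there, the condition
`q_i ≤ φ_m + η(k)` says exactly that `τ_m ≤ τ_v + √(ξ/k)/2`, so `τ_m` is the smaller term. -/

open Real Set Filter

noncomputable section

/-- on [φ_m, q_i] with q_i ∈ [φ_m, φ_m+η(k)], the challenger's payoff from
undercutting (extended by 0 at q_c = q_i) is maximized at q_c = φ_m, with value
τ_m(q_i, φ_m) = γ(q_i − φ_m)². -/
theorem stmt1 (φm φv γ ξ k : ℝ) (hφ : φm < φv) (hγ : 0 < γ) (hξ : 0 < ξ) (hk : 0 < k)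
    (qi : ℝ) (hqi : qi ∈ Set.Icc φm (φm + eta φm φv γ ξ k)) :
    let F : ℝ → ℝ := fun qc => if qc = qi then 0 else VL φm φv γ ξ k qi qc;
    F φm = tauM φm γ qi φm ∧
    tauM φm γ qi φm = γ * (qi - φm)^2 ∧
    (∀ qc ∈ Set.Icc φm qi, F qc ≤ F φm) := by
  intro F
  obtain ⟨h0, h1⟩ := hqi
  have hΔ : 0 < φv - φm := sub_pos.mpr hφ
  have hval : tauM φm γ qi φm = γ * (qi - φm)^2 := by
    unfold tauM; ring
  have hs : (qi - φm) * (4 * γ * (φv - φm)) ≤ Real.sqrt (ξ/k) := by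
    rw [← le_div_iff₀ (by positivity)]
    unfold eta at h1
    linarith
  have hF : F φm = tauM φm γ qi φm := by
    by_cases h : φm = qi
    · simp [F, h, tauM]
    · simp only [F, if_neg h, VL]
      apply min_eq_right
      have hdiff : tauV φv γ qi φm
          = tauM φm γ qi φm - (qi - φm) * (4 * γ * (φv - φm)) / 2 := by
        unfold tauV tauM; ring
      have hmax := le_max_left (tauV φv γ qi φm - (1/2) * Real.sqrt (ξ/k))
        (2 * tauV φv γ qi φm - tauM φm γ qi φm)
      linarith
  refine ⟨hF, hval, fun qc _ => ?_⟩
  rw [hF, hval]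
  by_cases h : qc = qi
  · simp only [F, if_pos h]
    positivity
  · simp only [F, if_neg h, VL]
    refine (min_le_right _ _).trans ?_
    have hsq : tauM φm γ qi qc = γ * (qi - φm)^2 - γ * (qc - φm)^2 := by
      unfold tauM; ring
    have : 0 ≤ γ * (qc - φm)^2 := by positivity
    linarith

end
end

section
/- Fix k > 0 and q_i ∈ [φ_m, φ_v]. Then V_R(q_i, φ_v) > 0 if and only if q_i < φ_v − √(√(ξ/k)/(2γ)), in which case V_R(q_i, φ_v) = γ(φ_v − q_i)² − (1/2)√(ξ/k). Moreover, on the interval [q_i, φ_v], the function q_c ↦ V_R(q_i, q_c) (extended by the value 0 at q_c = q_i) attains its maximum at q_c = φ_v if q_i < φ_v − √(√(ξ/k)/(2γ)), and at q_c = q_i (with value 0) otherwise. -/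
/-! Write `s = √(ξ/k)` and `d = φv - qi ≥ 0`. The identity `τ_v = γ (d² - (φv - qc)²)` shows that
`τ_v` is at most `γ d²`, with equality at `qc = φv`. For `φm ≤ qi ≤ qc` the outlet's threshold is
nonpositive, so `V_R ≤ max (γ d² - s/2) 0` on `[qi, φv]` (`VR_le`). If `γ d² > s/2`, then
at `qc = φv` one has `τ_v - τ_m ≥ τ_v = γ d² > s/2`, so the inner minimum is its first argument and
the bound is attained there (`VR_at_phiV`). Finally, `qi < φv - √(s/(2γ))`
is equivalent to `s/2 < γ d²` (`lt_cutoff_iff`). -/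

open Real Set Filter

noncomputable section

theorem tauM_nonpos {φm γ qi qc : ℝ} (hγ : 0 < γ) (hm : φm ≤ qi) (hq : qi ≤ qc) :
    tauM φm γ qi qc ≤ 0 := by
  unfold tauM
  exact mul_nonpos_of_nonpos_of_nonneg
    (mul_nonpos_of_nonneg_of_nonpos hγ.le (by linarith)) (by linarith)

/-- Upper bound for the payoff from any policy to the right of the incumbent. -/
theorem VR_le {φm φv γ ξ k qi qc : ℝ} (hγ : 0 < γ) (hm : φm ≤ qi) (hq : qi ≤ qc) :
    VR φm φv γ ξ k qi qc ≤ max (γ * (φv - qi)^2 - (1/2) * Real.sqrt (ξ/k)) 0 := by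
  have hV : tauV φv γ qi qc ≤ γ * (φv - qi)^2 := by
    unfold tauV
    nlinarith [mul_nonneg hγ.le (sq_nonneg (φv - qc))]
  refine max_le_max ?_ (tauM_nonpos hγ hm hq)
  have := min_le_left (tauV φv γ qi qc + (1/2) * Real.sqrt (ξ/k))
    (2 * tauV φv γ qi qc - tauM φm γ qi qc)
  linarith

/-- When the challenger can profit at the voter's bliss policy, the bound of `VR_le` is attained. -/
theorem VR_at_phiV {φm φv γ ξ k qi : ℝ} (hγ : 0 < γ) (hm : φm ≤ qi) (hv : qi ≤ φv)
    (h : (1/2) * Real.sqrt (ξ/k) < γ * (φv - qi)^2) :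
    VR φm φv γ ξ k qi φv = γ * (φv - qi)^2 - (1/2) * Real.sqrt (ξ/k) := by
  have hV : tauV φv γ qi φv = γ * (φv - qi)^2 := by unfold tauV; ring
  have hM := tauM_nonpos hγ hm hv
  have hgap : γ * (φv - qi)^2 ≤ tauV φv γ qi φv - tauM φm γ qi φv := by linarith
  unfold VR
  rw [min_eq_left (by linarith), max_eq_left (by linarith), hV]
  ring

theorem lt_cutoff_iff {φv γ s qi : ℝ} (hγ : 0 < γ) (hs : 0 ≤ s) (hv : qi ≤ φv) :
    qi < φv - Real.sqrt (s / (2*γ)) ↔ (1/2) * s < γ * (φv - qi)^2 := by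
  rw [lt_sub_comm, Real.sqrt_lt (by positivity) (by linarith), div_lt_iff₀ (by positivity)]
  constructor <;> intro h <;> linarith

/-- V_R(q_i, φ_v) > 0 iff q_i < φ_v − √(√(ξ/k)/(2γ)), in which case
V_R(q_i, φ_v) = γ(φ_v − q_i)² − (1/2)√(ξ/k); on [q_i, φ_v] the payoff (extended by 0 at
q_c = q_i) is maximized at φ_v in that case, and at q_i (with value 0) otherwise. -/
theorem stmt2 (φm φv γ ξ k : ℝ) (hφ : φm < φv) (hγ : 0 < γ) (hξ : 0 < ξ) (hk : 0 < k)
    (qi : ℝ) (hqi : qi ∈ Set.Icc φm φv) :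
    let F : ℝ → ℝ := fun qc => if qc = qi then 0 else VR φm φv γ ξ k qi qc;
    let c : ℝ := φv - Real.sqrt (Real.sqrt (ξ/k) / (2*γ));
    (0 < VR φm φv γ ξ k qi φv ↔ qi < c) ∧
    (qi < c → VR φm φv γ ξ k qi φv = γ*(φv - qi)^2 - (1/2) * Real.sqrt (ξ/k)) ∧
    (qi < c → ∀ qc ∈ Set.Icc qi φv, F qc ≤ F φv) ∧
    (¬ qi < c → ∀ qc ∈ Set.Icc qi φv, F qc ≤ F qi) ∧
    F qi = 0 := by
  intro F c
  obtain ⟨hm, hv⟩ := hqi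
  have hs : 0 < Real.sqrt (ξ/k) := Real.sqrt_pos.2 (div_pos hξ hk)
  have hc : qi < c ↔ (1/2) * Real.sqrt (ξ/k) < γ * (φv - qi)^2 := lt_cutoff_iff hγ hs.le hv
  have hFi : F qi = 0 := if_pos rfl
  have hF : ∀ qc, qi ≤ qc →
      F qc ≤ max (γ * (φv - qi)^2 - (1/2) * Real.sqrt (ξ/k)) 0 := by
    intro qc hq
    by_cases h : qc = qi
    · rw [h, hFi]
      exact le_max_right _ _
    · simp only [F, if_neg h]
      exact VR_le hγ hm hq
  rw [hc]
  refine ⟨⟨fun h => ?_, fun h => ?_⟩, fun h => VR_at_phiV hγ hm hv h,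
    fun h qc hq => ?_, fun h qc hq => ?_, hFi⟩
  · by_contra hn
    have hle := VR_le (φv := φv) (ξ := ξ) (k := k) hγ hm hv
    rw [max_eq_right (by linarith)] at hle
    linarith
  · rw [VR_at_phiV hγ hm hv h]
    linarith
  · have hne : φv ≠ qi := by
      rintro rfl
      norm_num at h
      linarith
    have hFv : F φv = γ * (φv - qi)^2 - (1/2) * Real.sqrt (ξ/k) := by
      simp only [F, if_neg hne]
      exact VR_at_phiV hγ hm hv h
    have hle := hF qc hq.1
    rwa [max_eq_left (by linarith), ← hFv] at hle
  · have hle := hF qc hq.1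
    rwa [max_eq_right (by linarith), ← hFi] at hle

end
end

section
/- For every k > 0, the equilibrium policies satisfy q_i*(k) ≥ q_c*(k), with strict inequality for every k > k̄/4, and (q_i*(k) − q_c*(k))² ≤ ξ/(16γ²k(φ_v − φ_m)²). Consequently the equilibrium policy pair satisfies the full-persuasion condition for every finite k. -/
/-!
By `eta_sq`, the bound on the squared policy gap is exactly `η(k)²`, and the gap `q_i* − q_c*`
equals `η`, `(φ_v − φ_m)/2 − η` and `0` on the three cost ranges `k > k̄`, `k̄/4 < k ≤ k̄` and
`k ≤ k̄/4`. On the first range everything follows from `η > 0`. On the middle range, `k > k̄/4` is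
equivalent to `η < (φ_v − φ_m)/2`, which makes the gap positive, and `k ≤ k̄` is equivalent to
`(φ_v − φ_m)/4 ≤ η`, which makes the gap at most `η`.
-/

open Real Set Filter

noncomputable section

theorem eta_pos {φm φv γ ξ k : ℝ} (hφ : φm < φv) (hγ : 0 < γ) (hξ : 0 < ξ) (hk : 0 < k) :
    0 < eta φm φv γ ξ k := by
  have hD : 0 < φv - φm := sub_pos.2 hφ
  unfold eta
  positivity

theorem eta_sq {φm φv γ ξ k : ℝ} (hξ : 0 < ξ) (hk : 0 < k) :
    eta φm φv γ ξ k ^ 2 = ξ / (16*γ^2*k*(φv - φm)^2) := by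
  unfold eta
  rw [div_pow, Real.sq_sqrt (by positivity), div_div]
  congr 1
  ring

theorem eta_lt_half {φm φv γ ξ k : ℝ} (hφ : φm < φv) (hγ : 0 < γ) (hξ : 0 < ξ) (hk : 0 < k)
    (h : kbar φm φv γ ξ / 4 < k) : eta φm φv γ ξ k < (φv - φm) / 2 := by
  have hD : 0 < φv - φm := sub_pos.2 hφ
  refine lt_of_pow_lt_pow_left₀ 2 (by positivity) ?_
  rw [eta_sq hξ hk, div_lt_iff₀ (by positivity)]
  rw [kbar, div_div, div_lt_iff₀ (by positivity)] at h
  linarith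

theorem quarter_le_eta {φm φv γ ξ k : ℝ} (hφ : φm < φv) (hγ : 0 < γ) (hξ : 0 < ξ) (hk : 0 < k)
    (h : k ≤ kbar φm φv γ ξ) : (φv - φm) / 4 ≤ eta φm φv γ ξ k := by
  have hD : 0 < φv - φm := sub_pos.2 hφ
  refine (pow_le_pow_iff_left₀ (by positivity) (eta_pos hφ hγ hξ hk).le two_ne_zero).1 ?_
  rw [eta_sq hξ hk, le_div_iff₀ (by positivity)]
  rw [kbar, le_div_iff₀ (by positivity)] at h
  linarith

/-- for every k > 0 we have q_i*(k) ≥ q_c*(k), strictly for k > k̄/4, and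
(q_i*(k) − q_c*(k))² ≤ ξ/(16γ²k(φ_v − φ_m)²), so the equilibrium policies satisfy the
full-persuasion condition for every finite k. -/
theorem stmt4 (φm φv γ ξ : ℝ) (hφ : φm < φv) (hγ : 0 < γ) (hξ : 0 < ξ) :
    ∀ k : ℝ, 0 < k →
      qcstar φm φv γ ξ k ≤ qistar φm φv γ ξ k ∧
      (kbar φm φv γ ξ / 4 < k → qcstar φm φv γ ξ k < qistar φm φv γ ξ k) ∧
      (qistar φm φv γ ξ k - qcstar φm φv γ ξ k)^2 ≤ ξ/(16*γ^2*k*(φv - φm)^2) := by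
  intro k hk
  have h0 := eta_pos hφ hγ hξ hk
  rw [← eta_sq hξ hk]
  unfold qcstar qistar
  by_cases h1 : kbar φm φv γ ξ < k
  · simp only [if_pos h1]
    refine ⟨by linarith, fun _ => by linarith, le_of_eq (by ring)⟩
  · simp only [if_neg h1]
    by_cases h2 : kbar φm φv γ ξ / 4 < k
    · simp only [if_pos h2]
      have h3 := eta_lt_half hφ hγ hξ hk h2
      have h4 := quarter_le_eta hφ hγ hξ hk (not_lt.1 h1)
      refine ⟨by linarith, fun _ => by linarith, ?_⟩
      exact pow_le_pow_left₀ (by linarith) (by linarith) 2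
    · simp only [if_neg h2]
      refine ⟨le_rfl, fun h => absurd h h2, ?_⟩
      rw [sub_self]
      nlinarith

end
end

section
/- Fix k ≥ k̄ and set q̄′ = φ_v + η(k) − (ξ/(γ²k))^{1/4}. Define V̂ : [φ_m, φ_v] → ℝ by V̂(q_i) = −(γ(φ_v − q_i)² − (1/2)√(ξ/k)) for q_i ∈ [φ_m, q̄′) and V̂(q_i) = −τ_m(q_i, q_i − η(k)) for q_i ∈ [q̄′, φ_v]. Then q̄′ ∈ [φ_m, φ_v], V̂ is continuous, strictly increasing on [φ_m, q̄′], strictly decreasing on [q̄′, φ_v], and attains its unique maximum on [φ_m, φ_v] at q_i = q̄′. -/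
/-!
Put `r = (ξ / (γ² k))^{1/4}`, `D = φv - φm`. Then `√(ξ/k) = γ r²`, `4 D η = r²`, and `k ≥ k̄` says
`r ≤ D` (`fourthRoot_spec`). Hence `0 < η < r ≤ D`, so `qbar = φv + η - r` lies in `[φm, φv]`.
The left branch of the payoff is a downward parabola with vertex `φv ≥ qbar`, hence strictly
increasing up to `qbar`; the right branch is affine with slope `-2 γ η < 0`. The relation
`4 D η = r²` makes the branches agree at `qbar`, which yields continuity and the unique maximum.
-/

open Real Set Filter

noncomputable section

/-- With `r = (ξ / (γ² k))^{1/4}` and `k ≥ k̄`, the quantities of the model become polynomial in `r`: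
`√(ξ/k) = γ r²`, and the cost condition `k ≥ k̄` reads `r ≤ φv - φm`. -/
lemma fourthRoot_spec (φm φv γ ξ k : ℝ) (hφ : φm < φv) (hγ : 0 < γ) (hξ : 0 < ξ)
    (hk : kbar φm φv γ ξ ≤ k) :
    0 < (ξ/(γ^2*k)) ^ ((1:ℝ)/4) ∧ (ξ/(γ^2*k)) ^ ((1:ℝ)/4) ≤ φv - φm ∧
      Real.sqrt (ξ/k) = γ * ((ξ/(γ^2*k)) ^ ((1:ℝ)/4))^2 := by
  have hD : 0 < φv - φm := sub_pos.2 hφ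
  have hkpos : 0 < k := lt_of_lt_of_le (by unfold kbar; positivity) hk
  have hx : 0 < ξ/(γ^2*k) := by positivity
  have hr : 0 < (ξ/(γ^2*k)) ^ ((1:ℝ)/4) := Real.rpow_pos_of_pos hx _
  have hr4 : ((ξ/(γ^2*k)) ^ ((1:ℝ)/4))^4 = ξ/(γ^2*k) := by
    rw [← Real.rpow_natCast, ← Real.rpow_mul hx.le]
    norm_num
  refine ⟨hr, ?_, ?_⟩
  · refine le_of_pow_le_pow_left₀ (n := 4) (by norm_num) hD.le ?_
    rw [hr4, div_le_iff₀ (by positivity)]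
    unfold kbar at hk
    rw [div_le_iff₀ (by positivity)] at hk
    linarith
  · rw [Real.sqrt_eq_iff_mul_self_eq (by positivity) (by positivity)]
    symm
    calc γ * ((ξ/(γ^2*k)) ^ ((1:ℝ)/4))^2 * (γ * ((ξ/(γ^2*k)) ^ ((1:ℝ)/4))^2)
        = γ^2 * ((ξ/(γ^2*k)) ^ ((1:ℝ)/4))^4 := by ring
      _ = ξ / k := by rw [hr4]; field_simp

/-- for k ≥ k̄, the incumbent's payoff V̂ is continuous, strictly increasing
on [φ_m, q̄′], strictly decreasing on [q̄′, φ_v], and uniquely maximized at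
q̄′ = φ_v + η(k) − (ξ/(γ²k))^{1/4} ∈ [φ_m, φ_v]. -/
theorem stmt5 (φm φv γ ξ k : ℝ) (hφ : φm < φv) (hγ : 0 < γ) (hξ : 0 < ξ)
    (hk : kbar φm φv γ ξ ≤ k) :
    let qbar : ℝ := φv + eta φm φv γ ξ k - (ξ/(γ^2*k)) ^ ((1:ℝ)/4);
    let Vhat : ℝ → ℝ := fun qi =>
      if qi < qbar then -(γ*(φv - qi)^2 - (1/2) * Real.sqrt (ξ/k))
      else -(tauM φm γ qi (qi - eta φm φv γ ξ k));
    qbar ∈ Set.Icc φm φv ∧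
    ContinuousOn Vhat (Set.Icc φm φv) ∧
    StrictMonoOn Vhat (Set.Icc φm qbar) ∧
    StrictAntiOn Vhat (Set.Icc qbar φv) ∧
    (∀ qi ∈ Set.Icc φm φv, qi ≠ qbar → Vhat qi < Vhat qbar) := by
  intro qbar Vhat
  obtain ⟨hr, hrD, hs⟩ := fourthRoot_spec φm φv γ ξ k hφ hγ hξ hk
  have hD : 0 < φv - φm := sub_pos.2 hφ
  have hη : eta φm φv γ ξ k * (4 * (φv - φm)) = ((ξ/(γ^2*k)) ^ ((1:ℝ)/4))^2 := by
    unfold eta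
    rw [hs]
    field_simp
  have hqbar : qbar = φv + eta φm φv γ ξ k - (ξ/(γ^2*k)) ^ ((1:ℝ)/4) := rfl
  have hVhat : Vhat = fun qi =>
      if qi < qbar then -(γ*(φv - qi)^2 - (1/2) * Real.sqrt (ξ/k))
      else -(tauM φm γ qi (qi - eta φm φv γ ξ k)) := rfl
  clear_value Vhat qbar
  generalize (ξ/(γ^2*k)) ^ ((1:ℝ)/4) = r at *
  generalize eta φm φv γ ξ k = η at *
  rw [hs] at hVhat
  have hη0 : 0 < η := by
    by_contra hneg
    nlinarith [pow_pos hr 2]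
  have hηr : η < r := by
    by_contra hneg
    nlinarith
  have hlo : φm ≤ qbar := by linarith
  have hhi : qbar ≤ φv := by linarith
  -- The two branches agree at `qbar`: both equal `-γ (η² - 2 r η + r² / 2)`.
  have hglue : -(γ*(φv - qbar)^2 - (1/2) * (γ * r^2)) = -(tauM φm γ qbar (qbar - η)) := by
    unfold tauM
    rw [hqbar]
    linear_combination (γ / 2) * hη
  have hleft : ∀ x ≤ qbar, Vhat x = -(γ*(φv - x)^2 - (1/2) * (γ * r^2)) := by
    intro x hx
    rw [hVhat]
    rcases hx.lt_or_eq with h | h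
    · simp only [if_pos h]
    · subst h
      simp only [lt_irrefl, if_false]
      exact hglue.symm
  have hright : ∀ x, qbar ≤ x → Vhat x = -(tauM φm γ x (x - η)) := by
    intro x hx
    rw [hVhat]
    simp only [if_neg (not_lt.2 hx)]
  have hmono : StrictMonoOn Vhat (Set.Icc φm qbar) := by
    intro x hx y hy hxy
    rw [hleft x hx.2, hleft y hy.2]
    have hsq : (φv - y)^2 < (φv - x)^2 :=
      pow_lt_pow_left₀ (by linarith) (by linarith [hy.2]) (by norm_num)
    have := mul_lt_mul_of_pos_left hsq hγ
    linarith
  have hanti : StrictAntiOn Vhat (Set.Icc qbar φv) := by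
    intro x hx y hy hxy
    rw [hright x hx.1, hright y hy.1]
    unfold tauM
    -- The right branch is affine in the incumbent's policy, with slope `-2 γ η`.
    have := mul_pos (mul_pos hγ hη0) (sub_pos.2 hxy)
    linarith
  refine ⟨⟨hlo, hhi⟩, ?_, hmono, hanti, ?_⟩
  · have hV : Vhat = fun x => if x ≤ qbar then -(γ*(φv - x)^2 - (1/2) * (γ * r^2))
        else -(tauM φm γ x (x - η)) := by
      funext x
      split_ifs with h
      · exact hleft x h
      · exact hright x (not_le.1 h).le
    rw [hV]
    refine (Continuous.if_le (by fun_prop) (by unfold tauM; fun_prop) continuous_id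
      continuous_const ?_).continuousOn
    rintro x rfl
    exact hglue
  · intro x hx hne
    rcases lt_or_gt_of_ne hne with h | h
    · exact hmono ⟨hx.1, h.le⟩ ⟨hlo, le_rfl⟩ h
    · exact hanti ⟨le_rfl, hhi⟩ ⟨h.le, hx.2⟩ h

end
end

section
/- Fix k ≥ k̄. Then q̄′ = φ_v + η(k) − (ξ/(γ²k))^{1/4} is the unique real number q_i ≤ φ_v satisfying γ(φ_v − q_i)² + 2γη(k)(φ_v − q_i) + γη(k)² − √(ξ/k) = 0; equivalently, q̄′ is the unique q_i ≤ φ_v with γ(φ_v − q_i)² − (1/2)√(ξ/k) = τ_m(q_i, q_i − η(k)). (At q̄′ the challenger is indifferent between offering φ_v and undercutting the incumbent by η(k).) -/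
/-!
Put `s = √(ξ/k)`, `e = η(k)`, `d = φv - φm` and `r = (ξ/(γ²k))^{1/4}`, so that `γ r² = s` and
`4 γ d e = s`. The quadratic condition is `γ (φv - q + e)² = γ r²`; since `φv - q + e ≥ 0` for
`q ≤ φv`, its only solution there is `q = φv + e - r`. The root satisfies `q ≤ φv` because
`e = r²/(4d)` and `k ≥ k̄` says exactly `r ≤ d`, whence `e ≤ r`. Substituting `4 γ d e = s` turns
the indifference condition into the same quadratic.
-/

open Real Set Filter

noncomputable section

/-- The fourth root `r` enters the argument only through `0 < r`, `γ r² = √(ξ/k)`, and the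
bound `r ≤ φv - φm`, which is `k̄ ≤ k` in disguise. -/
lemma fourthRoot_facts {φm φv γ ξ k : ℝ} (hφ : φm < φv) (hγ : 0 < γ) (hξ : 0 < ξ)
    (hk : kbar φm φv γ ξ ≤ k) :
    0 < (ξ/(γ^2*k)) ^ ((1:ℝ)/4) ∧ γ * ((ξ/(γ^2*k)) ^ ((1:ℝ)/4))^2 = Real.sqrt (ξ/k) ∧
      (ξ/(γ^2*k)) ^ ((1:ℝ)/4) ≤ φv - φm := by
  have hd : 0 < φv - φm := sub_pos.2 hφ
  have hk0 : 0 < k := lt_of_lt_of_le (by unfold kbar; positivity) hk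
  have hx : 0 < ξ/(γ^2*k) := by positivity
  have hr : 0 < (ξ/(γ^2*k)) ^ ((1:ℝ)/4) := Real.rpow_pos_of_pos hx _
  have hr4 : ((ξ/(γ^2*k)) ^ ((1:ℝ)/4))^4 = ξ/(γ^2*k) := by
    rw [← Real.rpow_natCast, ← Real.rpow_mul hx.le]
    norm_num
  refine ⟨hr, ?_, ?_⟩
  · symm
    rw [Real.sqrt_eq_iff_mul_self_eq (by positivity) (by positivity)]
    calc ξ/k = γ^2 * ((ξ/(γ^2*k)) ^ ((1:ℝ)/4))^4 := by rw [hr4]; field_simp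
      _ = _ := by ring
  · refine le_of_pow_le_pow_left₀ (n := 4) (by norm_num) hd.le ?_
    rw [hr4, div_le_iff₀ (by positivity)]
    unfold kbar at hk
    rw [div_le_iff₀ (by positivity)] at hk
    linarith

/-- for k ≥ k̄, q̄′ = φ_v + η(k) − (ξ/(γ²k))^{1/4} is the unique q_i ≤ φ_v with
γ(φ_v−q_i)² + 2γη(k)(φ_v−q_i) + γη(k)² − √(ξ/k) = 0, equivalently the unique q_i ≤ φ_v with
γ(φ_v−q_i)² − (1/2)√(ξ/k) = τ_m(q_i, q_i − η(k)). -/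
theorem stmt6 (φm φv γ ξ k : ℝ) (hφ : φm < φv) (hγ : 0 < γ) (hξ : 0 < ξ)
    (hk : kbar φm φv γ ξ ≤ k) :
    let e : ℝ := eta φm φv γ ξ k;
    let qbar : ℝ := φv + e - (ξ/(γ^2*k)) ^ ((1:ℝ)/4);
    qbar ≤ φv ∧
    (γ*(φv - qbar)^2 + 2*γ*e*(φv - qbar) + γ*e^2 - Real.sqrt (ξ/k) = 0) ∧
    (∀ qi ≤ φv, γ*(φv - qi)^2 + 2*γ*e*(φv - qi) + γ*e^2 - Real.sqrt (ξ/k) = 0 →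
      qi = qbar) ∧
    (γ*(φv - qbar)^2 - (1/2) * Real.sqrt (ξ/k) = tauM φm γ qbar (qbar - e)) ∧
    (∀ qi ≤ φv, γ*(φv - qi)^2 - (1/2) * Real.sqrt (ξ/k) = tauM φm γ qi (qi - e) →
      qi = qbar) := by
  intro e qbar
  obtain ⟨hr, hrs, hrd⟩ := fourthRoot_facts hφ hγ hξ hk
  have hd : 0 < φv - φm := sub_pos.2 hφ
  have he : 4 * γ * (φv - φm) * e = Real.sqrt (ξ/k) := by
    simp only [e, eta]
    field_simp
  have he0 : 0 ≤ e := by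
    simp only [e, eta]
    positivity
  have hq : qbar = φv + e - (ξ/(γ^2*k)) ^ ((1:ℝ)/4) := rfl
  clear_value qbar e
  generalize (ξ/(γ^2*k)) ^ ((1:ℝ)/4) = r at *
  generalize Real.sqrt (ξ/k) = s at *
  have her : e ≤ r := by
    have h1 : 4 * (φv - φm) * e = r^2 :=
      mul_left_cancel₀ hγ.ne' (by linarith)
    nlinarith
  have huniq : ∀ qi ≤ φv, γ*(φv - qi)^2 + 2*γ*e*(φv - qi) + γ*e^2 - s = 0 → qi = qbar := by
    intro qi hqi h
    have h1 : (φv - qi + e)^2 = r^2 := mul_left_cancel₀ hγ.ne' (by linarith)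
    have h2 := (pow_left_inj₀ (by linarith) hr.le two_ne_zero).1 h1
    linarith
  have hroot : γ*(φv - qbar)^2 + 2*γ*e*(φv - qbar) + γ*e^2 - s = 0 := by
    rw [hq, ← hrs]
    ring
  refine ⟨by linarith, hroot, huniq, ?_, fun qi hqi h => huniq qi hqi ?_⟩
  · unfold tauM
    linarith
  · unfold tauM at h
    linarith

end
end

section
/- Fix k ∈ [k̄/4, k̄) and set q̄″ = (φ_v + φ_m)/2 − η(k) and q̄‴ = φ_m + η(k). Define V̂ : [φ_m, φ_v] → ℝ by V̂(q_i) = −(γ(φ_v − q_i)² − (1/2)√(ξ/k)) for q_i ∈ [φ_m, q̄″), V̂(q_i) = −γ(q_i − φ_m)² for q_i ∈ [q̄″, q̄‴], and V̂(q_i) = −τ_m(q_i, q_i − η(k)) for q_i ∈ (q̄‴, φ_v]. Then φ_m ≤ q̄″ < q̄‴ ≤ φ_v, V̂ is continuous, strictly increasing on [φ_m, q̄″], strictly decreasing on [q̄″, φ_v], and attains its unique maximum on [φ_m, φ_v] at q_i = q̄″. -/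
/-!
Put `D = φv - φm`, `s = √(ξ/k)` and `η = s / (4γD)`. The two bounds on `k` say exactly that
`γD² < s ≤ 2γD²`, i.e. `D/4 < η ≤ D/2` (`eta_bounds`), and this gives the ordering
`φm ≤ q̄″ < q̄‴ ≤ φv`.

Since `s = 4γDη`, the first two branches of `V̂` are both `-γ(D/2 - η)²` at `q̄″`; the third branch
is the affine function `-γη(2(q - φm) - η)`, which equals `-γη²` at `q̄‴`, as does the second. Hence
`V̂` is continuous. The first branch increases on `q ≤ φv`, the second decreases on `q ≥ φm`, and the
third has slope `-2γη < 0`, so `V̂` increases up to `q̄″` and decreases afterwards; the uniqueness of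
the maximizer follows.
-/

open Real Set Filter

noncomputable section

/-- The cost range `k ∈ [k̄/4, k̄)` in terms of `η(k)`, together with `√(ξ/k) = 4γ(φv - φm)η(k)`. -/
lemma eta_bounds (φm φv γ ξ k : ℝ) (hφ : φm < φv) (hγ : 0 < γ) (hξ : 0 < ξ)
    (hk1 : kbar φm φv γ ξ / 4 ≤ k) (hk2 : k < kbar φm φv γ ξ) :
    (φv - φm) / 4 < eta φm φv γ ξ k ∧ eta φm φv γ ξ k ≤ (φv - φm) / 2 ∧
      Real.sqrt (ξ / k) = 4 * γ * (φv - φm) * eta φm φv γ ξ k := by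
  have hD : 0 < φv - φm := sub_pos.mpr hφ
  have hc : 0 < γ ^ 2 * (φv - φm) ^ 4 := by positivity
  have hkbar : 0 < kbar φm φv γ ξ := div_pos hξ hc
  have hk : 0 < k := by linarith
  have hlt : k * (γ ^ 2 * (φv - φm) ^ 4) < ξ := (lt_div_iff₀ hc).mp hk2
  have hle : ξ ≤ 4 * k * (γ ^ 2 * (φv - φm) ^ 4) :=
    (div_le_iff₀ hc).mp (show kbar φm φv γ ξ ≤ 4 * k by linarith)
  have hs1 : γ * (φv - φm) ^ 2 < Real.sqrt (ξ / k) := by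
    apply Real.lt_sqrt_of_sq_lt
    rw [lt_div_iff₀ hk]
    linarith
  have hs2 : Real.sqrt (ξ / k) ≤ 2 * γ * (φv - φm) ^ 2 := by
    apply Real.sqrt_le_iff.mpr
    refine ⟨by positivity, ?_⟩
    rw [div_le_iff₀ hk]
    linarith
  have hd : 0 < 4 * γ * (φv - φm) := by positivity
  refine ⟨?_, ?_, ?_⟩
  · rw [eta, lt_div_iff₀ hd]
    linarith
  · rw [eta, div_le_iff₀ hd]
    linarith
  · rw [eta]
    field_simp

/-- for k ∈ [k̄/4, k̄), with q̄″ = (φ_v+φ_m)/2 − η(k) and q̄‴ = φ_m + η(k),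
the incumbent's payoff V̂ satisfies φ_m ≤ q̄″ < q̄‴ ≤ φ_v, is continuous, strictly increasing
on [φ_m, q̄″], strictly decreasing on [q̄″, φ_v], and uniquely maximized at q̄″. -/
theorem stmt8 (φm φv γ ξ k : ℝ) (hφ : φm < φv) (hγ : 0 < γ) (hξ : 0 < ξ)
    (hk1 : kbar φm φv γ ξ / 4 ≤ k) (hk2 : k < kbar φm φv γ ξ) :
    let qbb : ℝ := (φv + φm)/2 - eta φm φv γ ξ k;
    let qbbb : ℝ := φm + eta φm φv γ ξ k;
    let Vhat : ℝ → ℝ := fun qi =>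
      if qi < qbb then -(γ*(φv - qi)^2 - (1/2) * Real.sqrt (ξ/k))
      else if qi ≤ qbbb then -(γ*(qi - φm)^2)
      else -(tauM φm γ qi (qi - eta φm φv γ ξ k));
    φm ≤ qbb ∧ qbb < qbbb ∧ qbbb ≤ φv ∧
    ContinuousOn Vhat (Set.Icc φm φv) ∧
    StrictMonoOn Vhat (Set.Icc φm qbb) ∧
    StrictAntiOn Vhat (Set.Icc qbb φv) ∧
    (∀ qi ∈ Set.Icc φm φv, qi ≠ qbb → Vhat qi < Vhat qbb) := by
  intro qbb qbbb Vhat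
  obtain ⟨h1, h2, hs⟩ := eta_bounds φm φv γ ξ k hφ hγ hξ hk1 hk2
  generalize hη : eta φm φv γ ξ k = η at *
  have hη0 : 0 < η := by linarith
  have e1 : qbb = (φv + φm) / 2 - η := by rw [← hη]
  have e2 : qbbb = φm + η := by rw [← hη]
  have o1 : φm ≤ qbb := by linarith
  have o2 : qbb < qbbb := by linarith
  have o3 : qbbb ≤ φv := by linarith
  -- The three branches, each valid on a closed interval because neighbouring branches agree.
  have v1 : ∀ x ≤ qbb, Vhat x = -(γ * (φv - x) ^ 2 - 2 * γ * (φv - φm) * η) := by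
    intro x hx
    rcases hx.lt_or_eq with h | h
    · simp only [Vhat, if_pos h, hs]
      ring
    · simp only [Vhat, h, lt_irrefl, if_false, if_pos o2.le]
      rw [e1]
      ring
  have v2 : ∀ x, qbb ≤ x → x ≤ qbbb → Vhat x = -(γ * (x - φm) ^ 2) := by
    intro x hx hx'
    simp only [Vhat, if_neg hx.not_gt, if_pos hx']
  have v3 : ∀ x, qbbb ≤ x → Vhat x = -(γ * η * (2 * (x - φm) - η)) := by
    intro x hx
    rcases hx.lt_or_eq with h | h
    · simp only [Vhat, if_neg (o2.trans h).not_gt, if_neg h.not_ge, tauM, hη]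
      ring
    · rw [v2 x (o2.le.trans hx) h.ge, ← h, e2]
      ring
  have hcont : ContinuousOn Vhat (Set.Icc φm φv) := by
    apply Continuous.continuousOn
    have c23 : ContinuousOn Vhat (Set.Ici qbb) := by
      rw [← Set.Icc_union_Ici_eq_Ici o2.le]
      apply ContinuousOn.union_of_isClosed _ _ isClosed_Icc isClosed_Ici
      · exact (by fun_prop : Continuous fun x => -(γ * (x - φm) ^ 2)).continuousOn.congr
          fun x hx => v2 x hx.1 hx.2
      · exact (by fun_prop : Continuous fun x =>
          -(γ * η * (2 * (x - φm) - η))).continuousOn.congr fun x hx => v3 x hx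
    rw [← continuousOn_univ, ← Set.Iic_union_Ici (a := qbb)]
    apply ContinuousOn.union_of_isClosed _ c23 isClosed_Iic isClosed_Ici
    exact (by fun_prop : Continuous fun x =>
      -(γ * (φv - x) ^ 2 - 2 * γ * (φv - φm) * η)).continuousOn.congr fun x hx => v1 x hx
  have hmono : StrictMonoOn Vhat (Set.Icc φm qbb) := by
    intro x hx y hy hxy
    rw [v1 x hx.2, v1 y hy.2]
    have hy' : 0 ≤ φv - y := by linarith [hy.2]
    have := mul_lt_mul_of_pos_left
      (pow_lt_pow_left₀ (sub_lt_sub_left hxy φv) hy' two_ne_zero) hγ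
    linarith
  have hanti : StrictAntiOn Vhat (Set.Icc qbb φv) := by
    rw [← Set.Icc_union_Icc_eq_Icc o2.le o3]
    refine StrictAntiOn.union (c := qbbb) ?_ ?_ (isGreatest_Icc o2.le) (isLeast_Icc o3)
    · intro x hx y hy hxy
      rw [v2 x hx.1 hx.2, v2 y hy.1 hy.2]
      have hx' : 0 ≤ x - φm := by linarith [hx.1]
      have := mul_lt_mul_of_pos_left
        (pow_lt_pow_left₀ (sub_lt_sub_right hxy φm) hx' two_ne_zero) hγ
      linarith
    · intro x hx y hy hxy
      rw [v3 x hx.1, v3 y hy.1]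
      have := mul_lt_mul_of_pos_left hxy (mul_pos hγ hη0)
      linarith
  refine ⟨o1, o2, o3, hcont, hmono, hanti, ?_⟩
  intro x hx hne
  rcases lt_or_gt_of_ne hne with h | h
  · exact hmono ⟨hx.1, h.le⟩ ⟨o1, le_rfl⟩ h
  · exact hanti ⟨le_rfl, o2.le.trans o3⟩ ⟨h.le, hx.2⟩ h

end
end

section
/- For k ≥ k̄ and q_i ∈ [φ_m, φ_v], with q̄′ = φ_v + η(k) − (ξ/(γ²k))^{1/4}: if q_i ≤ q̄′ then V_R(q_i, φ_v) ≥ V_L(q_i, q_c) for every q_c ∈ [φ_m, q_i); and if q_i ≥ q̄′ then V_L(q_i, q_i − η(k)) ≥ V_R(q_i, q_c) for every q_c ∈ (q_i, φ_v], where q_i − η(k) ∈ [φ_m, q_i). (The challenger optimally proposes φ_v when the incumbent's policy is below q̄′ and optimally undercuts by η(k) when it is above q̄′.) -/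
/-!
Write `s = √(ξ/k)`, `D = φv - φm`, `x = φv - qi`, and `t = (ξ/(γ²k))^(1/4)`. Then `s = γ t²`,
`4 D η = t²`, and `k ≥ k̄` says `t ≤ D` (`scaled_parameters`), so that `4 η ≤ t`. Up to the factor
`γ`, proposing `φv` yields at least `x² - t²/2` when `x ≥ η`, while undercutting by `η` yields exactly
`t²/2 + x² - (x + η)²`, because there the two branches of the minimum in `VL` coincide. Their
comparison is that of `(x + η)²` with `t²`, which changes sign at `x = t - η`, that is, at `qi = q̄′`.

An undercut by `d ≥ η` yields at most `t²/2 + x² - (x + d)²`, which decreases in `d`; one by `d ≤ η`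
yields at most `2 (D - x) d - d²`, which increases in `d` as long as `d ≤ D - x`. When `η > D - x` the
undercut by `η` leaves the admissible range, but then `2 (D - x) d - d² ≤ (D - x)² ≤ t²/16`, whereas
`x² - t²/2 ≥ (3/4)² D² - t²/2 ≥ t²/16`. A proposal `qc > qi` yields at most `x² - t²/2` through
the first branch of `VR` and at most `0` through the second, and for `qi ≥ q̄′` the undercut by `η`
yields at least both.
-/

open Real Set Filter

noncomputable section

/-- The quartic root `t` in `q̄′` satisfies `√(ξ/k) = γ t²` and `4 (φv - φm) η = t²`; the condition
`k̄ ≤ k` amounts to `t ≤ φv - φm`. -/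
lemma scaled_parameters {φm φv γ ξ k : ℝ} (hφ : φm < φv) (hγ : 0 < γ) (hξ : 0 < ξ)
    (hk : kbar φm φv γ ξ ≤ k) :
    ∃ t : ℝ, (ξ/(γ^2*k)) ^ ((1:ℝ)/4) = t ∧ 0 < t ∧ t ≤ φv - φm ∧ √(ξ/k) = γ * t^2 ∧
      4 * (φv - φm) * eta φm φv γ ξ k = t^2 := by
  have hD : 0 < φv - φm := sub_pos.mpr hφ
  have hk0 : 0 < k := lt_of_lt_of_le (by unfold kbar; positivity) hk
  have hpos : 0 < ξ/(γ^2*k) := by positivity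
  have ht : 0 < (ξ/(γ^2*k)) ^ ((1:ℝ)/4) := by positivity
  have h4 : ((ξ/(γ^2*k)) ^ ((1:ℝ)/4))^4 = ξ/(γ^2*k) := by
    rw [← Real.rpow_natCast, ← Real.rpow_mul hpos.le]
    norm_num
  generalize (ξ/(γ^2*k)) ^ ((1:ℝ)/4) = t at ht h4
  have hs : √(ξ/k) = γ * t^2 := by
    rw [Real.sqrt_eq_iff_mul_self_eq (by positivity) (by positivity)]
    symm
    calc γ * t^2 * (γ * t^2) = γ^2 * t^4 := by ring
      _ = ξ/k := by rw [h4]; field_simp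
  refine ⟨t, rfl, ht, ?_, hs, ?_⟩
  · refine le_of_pow_le_pow_left₀ (n := 4) (by norm_num) hD.le ?_
    rw [h4, div_le_iff₀ (by positivity)]
    rw [kbar, div_le_iff₀ (by positivity)] at hk
    linarith
  · rw [eta, hs]
    field_simp

/-- The payoff bound for undercuts, in units of `γ`: an undercut by `d` yields no more than the
proposal `φv` when `x + η ≥ t`. The hypotheses `h₁`, `h₂` are the two branches of `VL`. -/
lemma undercut_bound {D x d t η y : ℝ} (ht : 0 < t) (htD : t ≤ D) (hη : 4 * D * η = t^2)
    (hd : 0 < d) (hdx : d ≤ D - x) (hx : t ≤ x + η)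
    (h₁ : η ≤ d → y ≤ t^2/2 + x^2 - (x + d)^2) (h₂ : y ≤ 2 * (D - x) * d - d^2) :
    y ≤ x^2 - t^2/2 := by
  have hD : 0 < D := by linarith
  have hη0 : 0 < η := by
    by_contra h
    nlinarith [sq_pos_of_pos ht]
  have hη4 : 4 * η ≤ t := by
    by_contra! h
    nlinarith
  have hsq : t^2 ≤ (x + η)^2 := pow_le_pow_left₀ ht.le hx 2
  rcases le_total η d with h | h
  · have := h₁ h
    nlinarith
  · rcases le_total η (D - x) with h' | h'
    · have : 0 ≤ (η - d) * (2 * (D - x) - η - d) :=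
        mul_nonneg (by linarith) (by linarith)
      nlinarith
    · have hx34 : 3/4 * D ≤ x := by linarith
      have h1 : (3/4 * D)^2 ≤ x^2 := pow_le_pow_left₀ (by positivity) hx34 2
      have h2 : (D - x)^2 ≤ (t/4)^2 := pow_le_pow_left₀ (by linarith) (by linarith) 2
      have h3 : t^2 ≤ D^2 := pow_le_pow_left₀ ht.le htD 2
      nlinarith [sq_nonneg (D - x - d)]

/-- for k ≥ k̄ and q_i ∈ [φ_m, φ_v], with q̄′ = φ_v + η(k) − (ξ/(γ²k))^{1/4}:
if q_i ≤ q̄′ then proposing φ_v dominates any undercut, and if q_i ≥ q̄′ then undercutting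
by η(k) (which lands in [φ_m, q_i)) dominates any proposal above q_i. -/
theorem stmt9 (φm φv γ ξ k : ℝ) (hφ : φm < φv) (hγ : 0 < γ) (hξ : 0 < ξ)
    (hk : kbar φm φv γ ξ ≤ k) (qi : ℝ) (hqi : qi ∈ Set.Icc φm φv) :
    let qbar : ℝ := φv + eta φm φv γ ξ k - (ξ/(γ^2*k)) ^ ((1:ℝ)/4);
    (qi ≤ qbar → ∀ qc ∈ Set.Ico φm qi, VL φm φv γ ξ k qi qc ≤ VR φm φv γ ξ k qi φv) ∧
    (qbar ≤ qi →
      (qi - eta φm φv γ ξ k ∈ Set.Ico φm qi) ∧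
      ∀ qc ∈ Set.Ioc qi φv,
        VR φm φv γ ξ k qi qc ≤ VL φm φv γ ξ k qi (qi - eta φm φv γ ξ k)) := by
  intro qbar
  obtain ⟨hq1, hq2⟩ := hqi
  obtain ⟨t, hteq, ht, htD, hs, hη⟩ := scaled_parameters hφ hγ hξ hk
  have hqbar : qbar = φv + eta φm φv γ ξ k - t := by rw [← hteq]
  rw [hqbar]
  generalize eta φm φv γ ξ k = η at hη
  clear_value qbar
  have hD : 0 < φv - φm := sub_pos.mpr hφ
  have hη0 : 0 < η := by
    by_contra h
    nlinarith [sq_pos_of_pos ht]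
  have hη4 : 4 * η ≤ t := by
    by_contra! h
    nlinarith
  constructor
  · rintro hle qc ⟨hc1, hc2⟩
    have hR : γ * ((φv - qi)^2 - t^2/2) ≤ VR φm φv γ ξ k qi φv := by
      refine le_max_of_le_left ?_
      rw [hs, tauV, tauM, le_sub_iff_add_le]
      -- `φv - qi ≥ η`, so the first branch of the minimum is the smaller one.
      have h : 0 ≤ (φv - φm) * (φv - qi - η) := mul_nonneg hD.le (by linarith)
      have h' := mul_nonneg hγ.le h
      have hη' : γ * (4 * (φv - φm) * η) = γ * t^2 := by rw [hη]
      refine le_min ?_ ?_ <;> nlinarith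
    refine le_trans ?_ hR
    rw [← div_le_iff₀' hγ]
    refine undercut_bound (D := φv - φm) (x := φv - qi) (d := qi - qc) (η := η)
      ht htD hη (by linarith) (by linarith) (by linarith) (fun hd => ?_) ?_
    · rw [div_le_iff₀' hγ]
      refine (min_le_left _ _).trans ?_
      rw [hs, tauV, tauM, ← le_sub_iff_add_le]
      have h : 0 ≤ (φv - φm) * (qi - qc - η) := mul_nonneg hD.le (by linarith)
      have h' := mul_nonneg hγ.le h
      have hη' : γ * (4 * (φv - φm) * η) = γ * t^2 := by rw [hη]
      refine max_le ?_ ?_ <;> nlinarith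
    · rw [div_le_iff₀' hγ]
      refine (min_le_right _ _).trans (le_of_eq ?_)
      rw [tauM]
      ring
  · intro hle
    refine ⟨⟨by linarith, by linarith⟩, ?_⟩
    rintro qc ⟨hc1, hc2⟩
    have hη' : γ * (4 * (φv - φm) * η) = γ * t^2 := by rw [hη]
    have hL : γ * (t^2/2 + (φv - qi)^2 - (φv - qi + η)^2) ≤ VL φm φv γ ξ k qi (qi - η) := by
      rw [VL, hs, tauV, tauM]
      refine le_min ?_ ?_
      · rw [← sub_le_iff_le_add]
        refine le_max_of_le_left ?_
        linarith
      · linarith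
    refine le_trans ?_ hL
    have hsq : (φv - qi + η)^2 ≤ t^2 :=
      pow_le_pow_left₀ (by linarith) (by linarith) 2
    rw [VR, hs, tauV, tauM]
    refine max_le ?_ ?_
    · refine (sub_le_sub_right (min_le_left _ _) _).trans ?_
      have h : 0 ≤ γ * (t^2 - (φv - qi + η)^2 + (φv - qc)^2) :=
        mul_nonneg hγ.le (by nlinarith [sq_nonneg (φv - qc)])
      linarith
    · have h1 : 0 ≤ γ * ((qi + qc - 2 * φm) * (qc - qi)) :=
        mul_nonneg hγ.le (mul_nonneg (by linarith) (by linarith))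
      have h2 : 0 ≤ γ * ((2 * (qi - φm) - η) * η) :=
        mul_nonneg hγ.le (mul_nonneg (by linarith) hη0.le)
      linarith

end
end

section
/- The voter's equilibrium welfare W is strictly increasing on [k̄/4, ∞): for all k₁, k₂ with k̄/4 ≤ k₁ < k₂ < ∞, W(k₁) < W(k₂). -/
/-!
Put `d = φv - φm`, `P = φ / (γ d²) ≥ 3` and `u = (k̄ / k)^(1/4)`, a strictly decreasing function
of `k`. In units of `d`, the policies lie at distances `(a, b)` below the voter's bliss point with
`(a, b) = (u, u - u²/4)` for `u < 1` and `(a, b) = (1, 1/2 + u²/4)` for `1 ≤ u`, `u⁴ ≤ 4`; the two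
formulas agree at `u = 1`, and the second also covers the corner `k = k̄/4`. Up to the positive
factor `γ d² / (2 P)`, welfare is the polynomial `normW P a b` (`W_eq_normW`), so it suffices that
this polynomial is strictly decreasing in `u` on each piece.

On the piece `1 ≤ u` (`normW_corner_lt`) the challenger is fixed at `a = 1`, and raising `u` moves
the incumbent away from the voter; the resulting loss, of order `P`, dominates the effect of the
change in the cutoff. On the piece `u ≤ 1` (`normW_inner_lt`) the normalized cutoff is not monotone,
but between `u < v` it falls by at most `(v² - u²)/4`, and the effect of this is dominated by the
loss `P (v² - u²)` because `P ≥ 3`.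
-/

open Real Set Filter

noncomputable section

/-- The normalized endorsement cutoff `τ_m / (γ d²)`, where `a = (φv - q_c)/d`,
`b = (φv - q_i)/d` and `d = φv - φm`. -/
def normT (a b : ℝ) : ℝ := (a + b - 2) * (b - a)

/-- The voter's welfare multiplied by `2 P / (γ d²)`, where `P = φ / (γ d²)` and `a`, `b` are the
normalized policy distances of `normT`. -/
def normW (P a b : ℝ) : ℝ :=
  (normT a b + P) * (-a ^ 2) + (P - normT a b) * (-b ^ 2 + (P + normT a b) / 2)

/-- The normalized cost variable `(k̄ / k)^(1/4)`. -/
def costRoot (φm φv γ ξ k : ℝ) : ℝ := √√(kbar φm φv γ ξ / k)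

/-- The incumbent's normalized distance from the voter when the challenger is at `a = 1`
is `b = 1/2 + x/4` with `x = u²`; welfare strictly decreases in `x`. -/
lemma normW_corner_lt {P x y : ℝ} (hP : 3 ≤ P) (hx : 1 ≤ x) (hxy : x < y) (hy : y ≤ 2) :
    normW P 1 (1 / 2 + y / 4) < normW P 1 (1 / 2 + x / 4) := by
  -- The variables `e < f` are the incumbent's distances from the outlet, with cutoffs `e²`, `f²`.
  obtain ⟨e, he⟩ : ∃ e, e = 1 / 2 - y / 4 := ⟨_, rfl⟩
  obtain ⟨f, hf⟩ : ∃ f, f = 1 / 2 - x / 4 := ⟨_, rfl⟩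
  have he0 : 0 ≤ e := by linarith
  have hef : e < f := by linarith
  have hf1 : f ≤ 1 / 4 := by linarith
  rw [show 1 / 2 + y / 4 = 1 - e by linarith, show 1 / 2 + x / 4 = 1 - f by linarith]
  have hfac : normW P 1 (1 - f) - normW P 1 (1 - e) =
      (f - e) * (P * (2 - e - f) - 2 * (e ^ 2 + e * f + f ^ 2)
        + (1 / 2) * (e + f) * (e ^ 2 + f ^ 2)) := by
    unfold normW normT; ring
  have hpos : 0 < P * (2 - e - f) - 2 * (e ^ 2 + e * f + f ^ 2)
        + (1 / 2) * (e + f) * (e ^ 2 + f ^ 2) := by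
    have h1 : 0 ≤ (1 / 2) * (e + f) * (e ^ 2 + f ^ 2) := by
      have : 0 ≤ f := by linarith
      positivity
    nlinarith
  nlinarith [mul_pos (sub_pos.2 hef) hpos]

lemma normW_inner_lt {P u v : ℝ} (hP : 3 ≤ P) (hu : 0 ≤ u) (huv : u < v) (hv : v ≤ 1) :
    normW P v (v - v ^ 2 / 4) < normW P u (u - u ^ 2 / 4) := by
  have expand : ∀ w : ℝ, normW P w (w - w ^ 2 / 4) =
      P ^ 2 / 2 - (P * (w ^ 2 + (w - w ^ 2 / 4) ^ 2)
        + (w ^ 2 / 2 - w ^ 3 / 2 + w ^ 4 / 16) * (w ^ 3 / 2 - w ^ 4 / 16)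
        + (w ^ 2 / 2 - w ^ 3 / 2 + w ^ 4 / 16) ^ 2 / 2) := by
    intro w; unfold normW normT; ring
  have bounds : ∀ w : ℝ, 0 ≤ w → w ≤ 1 →
      (0 ≤ w ^ 2 / 2 - w ^ 3 / 2 + w ^ 4 / 16 ∧ w ^ 2 / 2 - w ^ 3 / 2 + w ^ 4 / 16 ≤ 1 / 2) ∧
      (0 ≤ w ^ 3 / 2 - w ^ 4 / 16 ∧ w ^ 3 / 2 - w ^ 4 / 16 ≤ 1 / 2) := by
    intro w h0 h1
    have a2 : w ^ 2 ≤ 1 := pow_le_one₀ h0 h1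
    have a3 : w ^ 3 ≤ w ^ 2 := pow_le_pow_of_le_one h0 h1 (by norm_num)
    have a4 : w ^ 4 ≤ w ^ 3 := pow_le_pow_of_le_one h0 h1 (by norm_num)
    have b4 : 0 ≤ w ^ 4 := by positivity
    refine ⟨⟨?_, ?_⟩, ?_, ?_⟩ <;> linarith
  have hv0 : 0 < v := by linarith
  obtain ⟨⟨tu0, tu1⟩, -, -⟩ := bounds u hu (by linarith)
  obtain ⟨⟨tv0, tv1⟩, dv0, dv1⟩ := bounds v hv0.le hv
  have hsq : 0 < v ^ 2 - u ^ 2 := by nlinarith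
  have hr : (u - u ^ 2 / 4) ^ 2 ≤ (v - v ^ 2 / 4) ^ 2 := by
    apply pow_le_pow_left₀ <;> nlinarith
  have hT : -(v ^ 2 - u ^ 2) / 4 ≤ (v ^ 2 / 2 - v ^ 3 / 2 + v ^ 4 / 16)
      - (u ^ 2 / 2 - u ^ 3 / 2 + u ^ 4 / 16) := by
    have h4 : u ^ 4 ≤ v ^ 4 := pow_le_pow_left₀ hu huv.le 4
    -- `w ↦ 3 w² / 2 - w³` is increasing on `[0, 1]`.
    have h3 : 0 ≤ (v - u) * (3 * (v + u) - 2 * (v ^ 2 + u * v + u ^ 2)) := by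
      apply mul_nonneg (by linarith)
      nlinarith [mul_nonneg hu hv0.le, mul_nonneg hu (sub_nonneg.2 hv),
        mul_nonneg hu (sub_nonneg.2 (huv.le.trans hv)), mul_nonneg hv0.le (sub_nonneg.2 hv)]
    nlinarith
  have hD : u ^ 3 / 2 - u ^ 4 / 16 ≤ v ^ 3 / 2 - v ^ 4 / 16 := by
    have h3 : 0 ≤ v ^ 3 - u ^ 3 := sub_nonneg.2 (pow_le_pow_left₀ hu huv.le 3)
    have h1 : v ^ 4 - u ^ 4 = v * (v ^ 3 - u ^ 3) + u ^ 3 * (v - u) := by ring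
    have h2 : u ^ 3 * (v - u) ≤ v ^ 3 - u ^ 3 := by
      have : v ^ 3 - u ^ 3 - u ^ 3 * (v - u)
        = (v - u) * (v ^ 2 + u * v + u ^ 2 * (1 - u)) := by ring
      have : 0 ≤ (v - u) * (v ^ 2 + u * v + u ^ 2 * (1 - u)) :=
        mul_nonneg (by linarith) (by
          have := mul_nonneg (sq_nonneg u) (by linarith : (0 : ℝ) ≤ 1 - u)
          nlinarith [mul_nonneg hu hv0.le])
      linarith
    nlinarith
  rw [expand, expand]
  generalize u ^ 2 / 2 - u ^ 3 / 2 + u ^ 4 / 16 = tu at *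
  generalize v ^ 2 / 2 - v ^ 3 / 2 + v ^ 4 / 16 = tv at *
  generalize u ^ 3 / 2 - u ^ 4 / 16 = du at *
  generalize v ^ 3 / 2 - v ^ 4 / 16 = dv at *
  generalize (u - u ^ 2 / 4) ^ 2 = ru at *
  generalize (v - v ^ 2 / 4) ^ 2 = rv at *
  have c1 : 3 * (v ^ 2 - u ^ 2) ≤ P * (v ^ 2 - u ^ 2) := by nlinarith
  have c2 : 0 ≤ P * (rv - ru) := mul_nonneg (by linarith) (by linarith)
  have c3 : -(v ^ 2 - u ^ 2) / 8 ≤ tv * dv - tu * du := by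
    nlinarith [mul_nonneg tu0 (sub_nonneg.2 hD)]
  have c4 : -(v ^ 2 - u ^ 2) / 8 ≤ tv ^ 2 / 2 - tu ^ 2 / 2 := by
    nlinarith [mul_nonneg (add_nonneg tu0 tv0) (by linarith : 0 ≤ tv - tu + (v ^ 2 - u ^ 2) / 4)]
  nlinarith

lemma kbar_pos {φm φv γ ξ : ℝ} (hφ : φm < φv) (hγ : 0 < γ) (hξ : 0 < ξ) :
    0 < kbar φm φv γ ξ := by
  have : 0 < φv - φm := sub_pos.2 hφ
  unfold kbar; positivity

lemma costRoot_sq {φm φv γ ξ k : ℝ} :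
    costRoot φm φv γ ξ k ^ 2 = √(kbar φm φv γ ξ / k) :=
  Real.sq_sqrt (Real.sqrt_nonneg _)

lemma costRoot_pow_four {φm φv γ ξ k : ℝ} (h : 0 ≤ kbar φm φv γ ξ / k) :
    costRoot φm φv γ ξ k ^ 4 = kbar φm φv γ ξ / k := by
  rw [show (4 : ℕ) = 2 * 2 from rfl, pow_mul, costRoot_sq, Real.sq_sqrt h]

lemma rpow_quarter_eq {φm φv γ ξ k : ℝ} (hφ : φm < φv) (hγ : 0 < γ) (hξ : 0 < ξ) (hk : 0 < k) :
    (ξ / (γ ^ 2 * k)) ^ ((1 : ℝ) / 4) = (φv - φm) * costRoot φm φv γ ξ k := by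
  have hd : 0 < φv - φm := sub_pos.2 hφ
  have hu : 0 ≤ costRoot φm φv γ ξ k := Real.sqrt_nonneg _
  have h4 : ξ / (γ ^ 2 * k) = ((φv - φm) * costRoot φm φv γ ξ k) ^ 4 := by
    rw [mul_pow, costRoot_pow_four (div_pos (kbar_pos hφ hγ hξ) hk).le, kbar]
    field_simp
  rw [h4, ← Real.rpow_natCast, ← Real.rpow_mul (by positivity)]
  norm_num

lemma eta_eq {φm φv γ ξ k : ℝ} (hφ : φm < φv) (hγ : 0 < γ) (hξ : 0 < ξ) (hk : 0 < k) :
    eta φm φv γ ξ k = (φv - φm) * (costRoot φm φv γ ξ k ^ 2 / 4) := by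
  have hd : 0 < φv - φm := sub_pos.2 hφ
  have hs : √(ξ / k) = γ * (φv - φm) ^ 2 * costRoot φm φv γ ξ k ^ 2 := by
    rw [Real.sqrt_eq_iff_mul_self_eq (by positivity) (by positivity)]
    have h4 := costRoot_pow_four (div_pos (kbar_pos hφ hγ hξ) hk).le
    calc ξ / k = γ ^ 2 * (φv - φm) ^ 4 * costRoot φm φv γ ξ k ^ 4 := by
          rw [h4, kbar]; field_simp
      _ = _ := by ring
  rw [eta, hs]
  field_simp

lemma W_eq_normW {φm φv γ ξ φ k a b : ℝ} (hφ : φm < φv) (hγ : 0 < γ) (hΦ : 0 < φ)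
    (ha : qcstar φm φv γ ξ k = φv - (φv - φm) * a)
    (hb : qistar φm φv γ ξ k = φv - (φv - φm) * b) :
    W φm φv γ ξ φ k =
      (γ * (φv - φm) ^ 2) ^ 2 / (2 * φ) * normW (φ / (γ * (φv - φm) ^ 2)) a b := by
  have hd : 0 < φv - φm := sub_pos.2 hφ
  have hT : tauMstar φm φv γ ξ k = γ * (φv - φm) ^ 2 * normT a b := by
    rw [tauMstar, tauM, ha, hb, normT]; ring
  rw [W, hT, ha, hb, normW]
  generalize φv - φm = d at *
  field_simp
  ring

lemma W_inner {φm φv γ ξ φ k : ℝ} (hφ : φm < φv) (hγ : 0 < γ) (hξ : 0 < ξ) (hΦ : 0 < φ)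
    (hk : kbar φm φv γ ξ < k) :
    W φm φv γ ξ φ k = (γ * (φv - φm) ^ 2) ^ 2 / (2 * φ) *
      normW (φ / (γ * (φv - φm) ^ 2)) (costRoot φm φv γ ξ k)
        (costRoot φm φv γ ξ k - costRoot φm φv γ ξ k ^ 2 / 4) := by
  have hk0 : 0 < k := (kbar_pos hφ hγ hξ).trans hk
  apply W_eq_normW hφ hγ hΦ
  · rw [qcstar, if_pos hk, rpow_quarter_eq hφ hγ hξ hk0]
  · rw [qistar, if_pos hk, rpow_quarter_eq hφ hγ hξ hk0, eta_eq hφ hγ hξ hk0]; ring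

lemma W_corner {φm φv γ ξ φ k : ℝ} (hφ : φm < φv) (hγ : 0 < γ) (hξ : 0 < ξ) (hΦ : 0 < φ)
    (hk : kbar φm φv γ ξ / 4 ≤ k) (hk' : k ≤ kbar φm φv γ ξ) :
    W φm φv γ ξ φ k = (γ * (φv - φm) ^ 2) ^ 2 / (2 * φ) *
      normW (φ / (γ * (φv - φm) ^ 2)) 1 (1 / 2 + costRoot φm φv γ ξ k ^ 2 / 4) := by
  have hkb := kbar_pos hφ hγ hξ
  have hk0 : 0 < k := by linarith
  apply W_eq_normW hφ hγ hΦ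
  · rw [qcstar, if_neg hk'.not_gt]; ring
  · rw [qistar, if_neg hk'.not_gt]
    split_ifs with h
    · rw [eta_eq hφ hγ hξ hk0]; ring
    · -- Here `k = k̄/4`, so `u² = 2` and the incumbent sits exactly at `φm`.
      have hk4 : k = kbar φm φv γ ξ / 4 := le_antisymm (not_lt.1 h) hk
      have h2 : costRoot φm φv γ ξ k ^ 2 = 2 := by
        rw [costRoot_sq, Real.sqrt_eq_iff_mul_self_eq (div_pos hkb hk0).le (by norm_num), hk4]
        field_simp
        norm_num
      rw [h2]; ring

lemma costRoot_lt {φm φv γ ξ k₁ k₂ : ℝ} (hφ : φm < φv) (hγ : 0 < γ) (hξ : 0 < ξ)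
    (hk : 0 < k₁) (hlt : k₁ < k₂) : costRoot φm φv γ ξ k₂ < costRoot φm φv γ ξ k₁ := by
  have hkb := kbar_pos hφ hγ hξ
  have : 0 < kbar φm φv γ ξ / k₂ := div_pos hkb (hk.trans hlt)
  exact Real.sqrt_lt_sqrt (Real.sqrt_nonneg _)
    (Real.sqrt_lt_sqrt this.le (div_lt_div_of_pos_left hkb hk hlt))

lemma costRoot_kbar {φm φv γ ξ : ℝ} (hφ : φm < φv) (hγ : 0 < γ) (hξ : 0 < ξ) :
    costRoot φm φv γ ξ (kbar φm φv γ ξ) = 1 := by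
  rw [costRoot, div_self (kbar_pos hφ hγ hξ).ne', Real.sqrt_one, Real.sqrt_one]

/-- the voter's equilibrium welfare is strictly increasing on [k̄/4, ∞). -/
theorem stmt11 (φm φv γ ξ φ : ℝ) (hφ : φm < φv) (hγ : 0 < γ) (hξ : 0 < ξ)
    (hΦ : 3*γ*(φv - φm)^2 ≤ φ) :
    ∀ k₁ k₂ : ℝ, kbar φm φv γ ξ / 4 ≤ k₁ → k₁ < k₂ →
      W φm φv γ ξ φ k₁ < W φm φv γ ξ φ k₂ := by
  intro k₁ k₂ hk hlt
  have hd : 0 < φv - φm := sub_pos.2 hφ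
  have hg : 0 < γ * (φv - φm) ^ 2 := by positivity
  have hφ0 : 0 < φ := by linarith
  have hP : 3 ≤ φ / (γ * (φv - φm) ^ 2) := by rw [le_div_iff₀ hg]; linarith
  have hc : 0 < (γ * (φv - φm) ^ 2) ^ 2 / (2 * φ) := by positivity
  have hkb := kbar_pos hφ hγ hξ
  have u0 : ∀ k, 0 ≤ costRoot φm φv γ ξ k := fun k => Real.sqrt_nonneg _
  -- The inner formula is valid at `k̄` too, by continuity of the equilibrium policies there.
  have inner : ∀ k, kbar φm φv γ ξ ≤ k → W φm φv γ ξ φ k =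
      (γ * (φv - φm) ^ 2) ^ 2 / (2 * φ) * normW (φ / (γ * (φv - φm) ^ 2)) (costRoot φm φv γ ξ k)
        (costRoot φm φv γ ξ k - costRoot φm φv γ ξ k ^ 2 / 4) := by
    intro k h
    rcases h.lt_or_eq with h | rfl
    · exact W_inner hφ hγ hξ hφ0 h
    · rw [W_corner hφ hγ hξ hφ0 (by linarith) le_rfl, costRoot_kbar hφ hγ hξ]
      norm_num
  have inner_lt : ∀ k k', kbar φm φv γ ξ ≤ k → k < k' →
      W φm φv γ ξ φ k < W φm φv γ ξ φ k' := by
    intro k k' h h'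
    rw [inner k h, inner k' (h.trans h'.le)]
    refine mul_lt_mul_of_pos_left (normW_inner_lt hP (u0 _)
      (costRoot_lt hφ hγ hξ (hkb.trans_le h) h') ?_) hc
    rw [← costRoot_kbar hφ hγ hξ]
    rcases h.lt_or_eq with h | h
    · exact (costRoot_lt hφ hγ hξ hkb h).le
    · rw [← h]
  have corner_lt : ∀ k k', kbar φm φv γ ξ / 4 ≤ k → k < k' → k' ≤ kbar φm φv γ ξ →
      W φm φv γ ξ φ k < W φm φv γ ξ φ k' := by
    intro k k' h h' h''
    have hk0 : 0 < k := by linarith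
    rw [W_corner hφ hγ hξ hφ0 h (h'.le.trans h''), W_corner hφ hγ hξ hφ0 (h.trans h'.le) h'']
    refine mul_lt_mul_of_pos_left (normW_corner_lt hP ?_
      (pow_lt_pow_left₀ (costRoot_lt hφ hγ hξ hk0 h') (u0 _) two_ne_zero) ?_) hc
    · rw [costRoot_sq, Real.one_le_sqrt, one_le_div (hk0.trans h')]
      exact h''
    · rw [costRoot_sq, Real.sqrt_le_left (by norm_num), div_le_iff₀ hk0]
      linarith
  rcases le_or_gt (kbar φm φv γ ξ) k₁ with h1 | h1
  · exact inner_lt _ _ h1 hlt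
  rcases le_or_gt k₂ (kbar φm φv γ ξ) with h2 | h2
  · exact corner_lt _ _ hk hlt h2
  · exact (corner_lt _ _ hk h1 le_rfl).trans (inner_lt _ _ le_rfl h2)

end
end

section
/- As k → ∞, the voter's equilibrium welfare converges to the complete-information benchmark: lim_{k→∞} W(k) = φ/4. -/
/-!
For `k > k̄` both equilibrium policies equal `φ_v` up to terms of order `k^(-1/2)` and `k^(-1/4)`,
so both tend to `φ_v` and the endorsement cutoff tends to `0`. Welfare is a polynomial in the two
policies and the cutoff, hence tends to its value at `(φ_v, φ_v, 0)`, which is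
`(1/2) * 0 + (1/2) * (φ/2) = φ/4`.
-/

open Real Set Filter

noncomputable section

lemma tendsto_div_atTop_zero (a c : ℝ) (hc : 0 < c) :
    Tendsto (fun k : ℝ => a / (c * k)) atTop (nhds 0) :=
  tendsto_const_nhds.div_atTop (tendsto_id.const_mul_atTop hc)

lemma tendsto_eta (φm φv γ ξ : ℝ) : Tendsto (eta φm φv γ ξ) atTop (nhds 0) := by
  have h : Tendsto (fun k : ℝ => ξ / k) atTop (nhds 0) :=
    tendsto_const_nhds.div_atTop tendsto_id
  have h' := (h.sqrt).div_const (4 * γ * (φv - φm))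
  rwa [Real.sqrt_zero, zero_div] at h'

lemma tendsto_root (γ ξ : ℝ) (hγ : 0 < γ) :
    Tendsto (fun k : ℝ => (ξ / (γ ^ 2 * k)) ^ ((1 : ℝ) / 4)) atTop (nhds 0) := by
  have h := (tendsto_div_atTop_zero ξ (γ ^ 2) (by positivity)).rpow_const
    (p := (1 : ℝ) / 4) (Or.inr (by norm_num))
  rwa [Real.zero_rpow (by norm_num)] at h

lemma tendsto_qcstar (φm φv γ ξ : ℝ) (hγ : 0 < γ) :
    Tendsto (qcstar φm φv γ ξ) atTop (nhds φv) := by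
  have h := (tendsto_const_nhds (x := φv)).sub (tendsto_root γ ξ hγ)
  rw [sub_zero] at h
  refine h.congr' ?_
  filter_upwards [eventually_gt_atTop (kbar φm φv γ ξ)] with k hk
  simp only [qcstar, if_pos hk]

lemma tendsto_qistar (φm φv γ ξ : ℝ) (hγ : 0 < γ) :
    Tendsto (qistar φm φv γ ξ) atTop (nhds φv) := by
  have h := ((tendsto_const_nhds (x := φv)).add (tendsto_eta φm φv γ ξ)).sub
    (tendsto_root γ ξ hγ)
  rw [add_zero, sub_zero] at h
  refine h.congr' ?_
  filter_upwards [eventually_gt_atTop (kbar φm φv γ ξ)] with k hk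
  simp only [qistar, if_pos hk]

/-- The two policies converge to the same point, so the factor `q_c - q_i` kills the cutoff. -/
lemma tendsto_tauMstar (φm φv γ ξ : ℝ) (hγ : 0 < γ) :
    Tendsto (tauMstar φm φv γ ξ) atTop (nhds 0) := by
  have hc := tendsto_qcstar φm φv γ ξ hγ
  have hi := tendsto_qistar φm φv γ ξ hγ
  have h := (((hc.const_sub (2 * φm)).sub hi).const_mul γ).mul (hc.sub hi)
  rwa [sub_self, mul_zero] at h

/-- as k → ∞, the voter's equilibrium welfare converges to the
complete-information benchmark φ/4. -/
theorem stmt12 (φm φv γ ξ φ : ℝ) (hφ : φm < φv) (hγ : 0 < γ) (hξ : 0 < ξ)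
    (hΦ : 3*γ*(φv - φm)^2 ≤ φ) :
    Filter.Tendsto (W φm φv γ ξ φ) Filter.atTop (nhds (φ/4)) := by
  have hpos : 0 < φ := by
    have : 0 < φv - φm := sub_pos.mpr hφ
    exact lt_of_lt_of_le (by positivity) hΦ
  have hc := tendsto_qcstar φm φv γ ξ hγ
  have hi := tendsto_qistar φm φv γ ξ hγ
  have ht := tendsto_tauMstar φm φv γ ξ hγ
  have h := (((ht.add_const φ).div_const (2 * φ)).mul
      (((hc.const_sub φv).pow 2).const_mul γ).neg).add
    (((ht.const_sub φ).div_const (2 * φ)).mul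
      ((((hi.const_sub φv).pow 2).const_mul γ).neg.add ((ht.const_add φ).div_const 2)))
  have hlim : (0 + φ) / (2 * φ) * -(γ * (φv - φv) ^ 2) +
      (φ - 0) / (2 * φ) * (-(γ * (φv - φv) ^ 2) + (φ + 0) / 2) = φ / 4 := by
    field_simp
    ring
  rwa [hlim] at h

end
end

section
/- Suppose additionally that −γ(φ_v − φ_m)² + φ/4 < 0. Then there exists a finite k′ > k̄/4 such that W(k) < 0 for all k ∈ (0, k′) and W(k) > 0 for all k > k′. (Since the voter's welfare without a media outlet equals 0, the voter is strictly better off without a media outlet for all k ∈ (0, k′).) -/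
/-!
After rescaling, welfare depends on `k` only through `u = (k̄/k)^(1/4)`: with `D = φ_v − φ_m` and
`P = φ/(γD²) ∈ [3, 4)`, one has `W(k) = γ²D⁴/(2φ) · welfare P u` (`W_eq_welfare`). The three policy
regimes `k > k̄`, `k̄/4 < k ≤ k̄`, `k ≤ k̄/4` become `u < 1`, `1 ≤ u < √2`, `u ≥ √2`.

The function `welfare P` is continuous and strictly decreasing on `[0, √2]`
(`strictAntiOn_welfare`), because the polynomial describing it on either side of `u = 1` has a
derivative whose sign is dominated by the terms proportional to `P ≥ 3`. It equals `P²/2 > 0` at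
`u = 0`, and `P²/2 − 2P < 0` for all `u ≥ √2`, as `P < 4`. Its unique zero `u₀ ∈ (0, √2)` gives
the threshold `k̄/u₀⁴ > k̄/4` for `k`.
-/

open Real Set Filter

noncomputable section

/-- Rescaled welfare `(2φ/(γ²D⁴)) W` in the regime `k ≥ k̄`, where `u = (k̄/k)^(1/4) ∈ [0, 1]`. -/
def welfareHigh (P u : ℝ) : ℝ :=
  -((u^2/2 - u^3/2 + u^4/16) + P) * u^2 - (P - (u^2/2 - u^3/2 + u^4/16)) * (u - u^2/4)^2
    + (P^2 - (u^2/2 - u^3/2 + u^4/16)^2)/2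

/-- Rescaled welfare in the regime `k ≤ k̄`, as a function of the rescaled incumbent's position
`q = (q_i − φ_m)/D ∈ [0, 1/4]`. -/
def welfareLow (P q : ℝ) : ℝ :=
  -(q^2 + P) - (P - q^2) * (1 - q)^2 + (P^2 - q^4)/2

/-- Rescaled welfare as a function of `u = (k̄/k)^(1/4)`. The truncation at `0` encodes that both
candidates sit at `φ_m` once `u² ≥ 2`. -/
def welfare (P u : ℝ) : ℝ :=
  if u ≤ 1 then welfareHigh P u else welfareLow P (max 0 (1/2 - u^2/4))

lemma strictAntiOn_welfareHigh {P : ℝ} (hP : 3 ≤ P) :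
    StrictAntiOn (welfareHigh P) (Icc 0 1) := by
  have hd : ∀ u : ℝ, HasDerivAt (welfareHigh P)
      (-(u - 3*u^2/2 + u^3/4) * u^2 - 2*((u^2/2 - u^3/2 + u^4/16) + P)*u
        + (u - 3*u^2/2 + u^3/4) * (u - u^2/4)^2
        - 2*(P - (u^2/2 - u^3/2 + u^4/16)) * (u - u^2/4) * (1 - u/2)
        - (u^2/2 - u^3/2 + u^4/16) * (u - 3*u^2/2 + u^3/4)) u := by
    intro u
    have ht : HasDerivAt (fun u : ℝ => u^2/2 - u^3/2 + u^4/16) (u - 3*u^2/2 + u^3/4) u := by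
      refine HasDerivAt.congr_deriv ((((hasDerivAt_pow 2 u).div_const 2).sub ((hasDerivAt_pow 3 u).div_const 2)).add
        ((hasDerivAt_pow 4 u).div_const 16)) ?_
      norm_num
      ring
    have hs : HasDerivAt (fun u : ℝ => u - u^2/4) (1 - u/2) u := by
      refine HasDerivAt.congr_deriv ((hasDerivAt_id u).sub ((hasDerivAt_pow 2 u).div_const 4)) ?_
      norm_num
      ring
    refine HasDerivAt.congr_deriv ((((ht.add_const P).neg.mul (hasDerivAt_pow 2 u)).sub
      ((ht.const_sub P).mul (hs.pow 2))).add (((ht.pow 2).const_sub (P^2)).div_const 2)) ?_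
    norm_num
    ring
  refine strictAntiOn_of_deriv_neg (convex_Icc 0 1)
    (fun u _ => (hd u).continuousAt.continuousWithinAt) ?_
  intro u hu
  rw [interior_Icc] at hu
  obtain ⟨h0, h1⟩ := hu
  rw [(hd u).deriv]
  -- `t` is the rescaled cutoff, `u * e` its derivative; both are small on `[0, 1]`.
  obtain ⟨t, ht⟩ : ∃ t, t = u^2/2 - u^3/2 + u^4/16 := ⟨_, rfl⟩
  obtain ⟨e, he⟩ : ∃ e, e = 1 - 3*u/2 + u^2/4 := ⟨_, rfl⟩
  have hue : u - 3*u^2/2 + u^3/4 = u * e := by rw [he]; ring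
  rw [hue, ← ht]
  have he0 : -1 ≤ e := by rw [he]; nlinarith
  have he1 : e ≤ 1 := by rw [he]; nlinarith
  have hu2 : u^2 ≤ 1 := by nlinarith
  have ht0 : 0 ≤ t := by
    have : t = u^2 * ((1 - u)/2 + u^2/16) := by rw [ht]; ring
    rw [this]
    have : 0 ≤ 1 - u := by linarith
    positivity
  have ht1 : t ≤ 1 := by
    have h3 : 0 < u^3 := by positivity
    have h4 : u^4 ≤ 1 := pow_le_one₀ h0.le h1.le
    rw [ht]; linarith
  obtain ⟨s, hs⟩ : ∃ s, s = 1 - u/4 := ⟨_, rfl⟩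
  have hus : u - u^2/4 = u * s := by rw [hs]; ring
  have hs0 : 0 ≤ s := by rw [hs]; linarith
  have hs1 : s ≤ 1 := by rw [hs]; linarith
  rw [hus]
  have hprod : 0 ≤ (P - t) * s * (1 - u/2) :=
    mul_nonneg (mul_nonneg (by linarith) hs0) (by linarith)
  have hb1 : -1 ≤ e * u^2 := by nlinarith [sq_nonneg u]
  have hus2 : (u*s)^2 ≤ 1 := by
    apply pow_le_one₀ (by positivity)
    nlinarith
  have hb2 : e * (u*s)^2 ≤ 1 := by nlinarith [sq_nonneg (u*s)]
  have hb3 : -1 ≤ t * e := by nlinarith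
  have key : -(e * u^2) - 2*(t + P) + e*(u*s)^2 - 2*((P - t)*s*(1 - u/2)) - t*e < 0 := by
    linarith
  have := mul_neg_of_pos_of_neg h0 key
  linarith

lemma strictMonoOn_welfareLow {P : ℝ} (hP : 3 ≤ P) :
    StrictMonoOn (welfareLow P) (Icc 0 (1/4)) := by
  have hd : ∀ q : ℝ, HasDerivAt (welfareLow P)
      (-2*q + 2*q*(1-q)^2 + 2*(P - q^2)*(1-q) - 2*q^3) q := by
    intro q
    have h2 := hasDerivAt_pow 2 q
    refine HasDerivAt.congr_deriv ((((h2.add_const P).neg.sub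
      ((h2.const_sub P).mul (((hasDerivAt_id q).const_sub 1).pow 2)))).add
      (((hasDerivAt_pow 4 q).const_sub (P^2)).div_const 2)) ?_
    norm_num
    ring
  refine strictMonoOn_of_deriv_pos (convex_Icc _ _)
    (fun u _ => (hd u).continuousAt.continuousWithinAt) ?_
  intro q hq
  rw [interior_Icc] at hq
  obtain ⟨h0, h1⟩ := hq
  rw [(hd q).deriv]
  have h2 : q^2 ≤ 1/16 := by nlinarith
  have h3 : q^3 ≤ 1/16 := by nlinarith
  have h4 : 0 ≤ q*(1-q)^2 := by positivity
  have h5 : 2 * (3/4) ≤ (P - q^2)*(1-q) :=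
    mul_le_mul (by linarith) (by linarith) (by norm_num) (by linarith)
  linarith

lemma continuous_welfare (P : ℝ) : Continuous (welfare P) := by
  unfold welfare
  refine Continuous.if_le ?_ ?_ continuous_id continuous_const ?_
  · unfold welfareHigh; fun_prop
  · unfold welfareLow; fun_prop
  · rintro u rfl
    norm_num [welfareHigh, welfareLow]

lemma strictAntiOn_welfare {P : ℝ} (hP : 3 ≤ P) :
    StrictAntiOn (welfare P) (Icc 0 (√2)) := by
  have h12 : (1:ℝ) ≤ √2 := Real.one_le_sqrt.2 (by norm_num)
  have hlow : ∀ u : ℝ, 1 ≤ u → welfare P u = welfareLow P (max 0 (1/2 - u^2/4)) := by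
    intro u hu
    rcases hu.eq_or_lt with rfl | hu
    · norm_num [welfare, welfareHigh, welfareLow]
    · simp [welfare, hu.not_ge]
  have hA : StrictAntiOn (welfare P) (Icc 0 1) :=
    (strictAntiOn_welfareHigh hP).congr fun u hu => by simp [welfare, hu.2]
  have hB : StrictAntiOn (welfare P) (Icc 1 (√2)) := by
    intro a ha b hb hab
    have hsq : ∀ x ∈ Icc (1:ℝ) (√2), 1 ≤ x^2 ∧ x^2 ≤ 2 := fun x hx =>
      ⟨one_le_pow₀ hx.1, by
        have := pow_le_pow_left₀ (by linarith [hx.1]) hx.2 2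
        rwa [Real.sq_sqrt (by norm_num)] at this⟩
    obtain ⟨ha1, ha2⟩ := hsq a ha
    obtain ⟨hb1, hb2⟩ := hsq b hb
    have hab2 : a^2 < b^2 := pow_lt_pow_left₀ hab (by linarith [ha.1]) (by norm_num)
    rw [hlow a ha.1, hlow b hb.1, max_eq_right (by linarith), max_eq_right (by linarith)]
    exact strictMonoOn_welfareLow hP ⟨by linarith, by linarith⟩ ⟨by linarith, by linarith⟩
      (by linarith)
  have := hA.union hB (isGreatest_Icc zero_le_one) (isLeast_Icc h12)
  rwa [Icc_union_Icc_eq_Icc zero_le_one h12] at this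

/-- The rescaled cost `u = (k̄/k)^(1/4)` reduces the welfare to the one-variable function
`welfare P` with `P = φ/(γD²)`. -/
lemma W_eq_welfare {φm φv γ ξ φ k u : ℝ} (hφ : φm < φv) (hγ : 0 < γ) (hξ : 0 < ξ) (hφ0 : 0 < φ)
    (hk : 0 < k) (hu : 0 < u) (huk : u^4 * k = kbar φm φv γ ξ) :
    W φm φv γ ξ φ k
      = γ^2 * (φv - φm)^4 / (2*φ) * welfare (φ/(γ*(φv - φm)^2)) u := by
  obtain ⟨D, hD⟩ : ∃ D, D = φv - φm := ⟨_, rfl⟩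
  have hD0 : 0 < D := by rw [hD]; linarith
  obtain rfl : φv = φm + D := by rw [hD]; ring
  have hDD : φm + D - φm = D := by ring
  have hξk : ξ = γ^2 * D^4 * (u^4 * k) := by
    rw [huk, kbar, hDD]
    field_simp
  have hx : (ξ/(γ^2*k)) ^ ((1:ℝ)/4) = D * u := by
    have : ξ/(γ^2*k) = (D*u)^4 := by rw [hξk]; field_simp
    rw [this, ← Real.rpow_natCast, ← Real.rpow_mul (by positivity)]
    norm_num
  have hs : √(ξ/k) = γ * D^2 * u^2 := by
    have : ξ/k = (γ * D^2 * u^2)^2 := by rw [hξk]; field_simp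
    rw [this, Real.sqrt_sq (by positivity)]
  have heta : eta φm (φm + D) γ ξ k = D * (u^2/4) := by
    rw [eta, hs, hDD]
    field_simp
  have hc1 : kbar φm (φm + D) γ ξ < k ↔ u < 1 := by
    rw [← huk, mul_lt_iff_lt_one_left hk, pow_lt_one_iff_of_nonneg hu.le (by norm_num)]
  have hc2 : kbar φm (φm + D) γ ξ / 4 < k ↔ u^2 < 2 := by
    rw [← huk, div_lt_iff₀ (by norm_num), mul_comm k 4, mul_lt_mul_iff_left₀ hk,
      ← pow_lt_pow_iff_left₀ (sq_nonneg u) (by norm_num : (0:ℝ) ≤ 2) (n := 2) (by norm_num)]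
    norm_num [← pow_mul]
  unfold W tauMstar tauM qistar qcstar welfare
  rw [hx, heta, hDD]
  simp only [hc1, hc2]
  rcases lt_trichotomy u 1 with h | rfl | h
  · simp only [h, h.le, if_true, welfareHigh]
    field_simp
    ring
  · norm_num [welfareHigh]
    field_simp
    ring
  · simp only [h.not_gt, h.not_ge, if_false, welfareLow]
    by_cases h2 : u^2 < 2
    · rw [if_pos h2, max_eq_right (by linarith)]
      field_simp
      ring
    · rw [if_neg h2, max_eq_left (by linarith)]
      field_simp
      ring

/-- if −γ(φ_v − φ_m)² + φ/4 < 0 then there is a finite k′ > k̄/4 with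
W(k) < 0 for all k ∈ (0, k′) and W(k) > 0 for all k > k′. -/
theorem stmt13 (φm φv γ ξ φ : ℝ) (hφ : φm < φv) (hγ : 0 < γ) (hξ : 0 < ξ)
    (hΦ : 3*γ*(φv - φm)^2 ≤ φ) (hneg : -(γ*(φv - φm)^2) + φ/4 < 0) :
    ∃ k' : ℝ, kbar φm φv γ ξ / 4 < k' ∧
      (∀ k : ℝ, 0 < k → k < k' → W φm φv γ ξ φ k < 0) ∧
      (∀ k : ℝ, k' < k → 0 < W φm φv γ ξ φ k) := by
  have hD : 0 < φv - φm := by linarith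
  have hφ0 : 0 < φ := lt_of_lt_of_le (by positivity) hΦ
  have hkb : 0 < kbar φm φv γ ξ := by unfold kbar; positivity
  obtain ⟨P, hPdef⟩ : ∃ P, P = φ/(γ*(φv - φm)^2) := ⟨_, rfl⟩
  have hP3 : 3 ≤ P := by
    rw [hPdef, le_div_iff₀ (by positivity)]
    linarith
  have hP4 : P < 4 := by
    rw [hPdef, div_lt_iff₀ (by positivity)]
    linarith
  have hC : 0 < γ^2 * (φv - φm)^4 / (2*φ) := by positivity
  have hanti := strictAntiOn_welfare hP3
  have hs2 : (√2 : ℝ)^2 = 2 := Real.sq_sqrt (by norm_num)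
  have hs1 : (1:ℝ) < √2 := by rw [Real.lt_sqrt] <;> norm_num
  have htail : ∀ u : ℝ, √2 ≤ u → welfare P u < 0 := by
    intro u hu
    have hu2 : 2 ≤ u^2 := by rw [← hs2]; gcongr
    rw [welfare, if_neg (by linarith), max_eq_left (by linarith), welfareLow]
    nlinarith
  have hzero : 0 < welfare P 0 := by
    norm_num [welfare, welfareHigh]
    positivity
  obtain ⟨u₀, hu₀, hroot⟩ := intermediate_value_Icc' (by linarith : (0:ℝ) ≤ √2)
    (continuous_welfare P).continuousOn ⟨(htail _ le_rfl).le, hzero.le⟩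
  have hu₀pos : 0 < u₀ := lt_of_le_of_ne hu₀.1 (by rintro rfl; linarith)
  have hu₀lt : u₀ < √2 := lt_of_le_of_ne hu₀.2 (by rintro rfl; linarith [htail _ le_rfl])
  have hu₀4 : u₀^4 < 4 := by
    calc u₀^4 < (√2)^4 := by gcongr
      _ = ((√2)^2)^2 := by ring
      _ = 4 := by rw [hs2]; norm_num
  have hu : ∀ k : ℝ, 0 < k → ∃ u : ℝ, 0 < u ∧ u^4 * k = kbar φm φv γ ξ := by
    intro k hk
    refine ⟨(kbar φm φv γ ξ / k) ^ ((1:ℝ)/4), by positivity, ?_⟩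
    rw [← Real.rpow_natCast, ← Real.rpow_mul (by positivity)]
    norm_num
    field_simp
  have hk'pos : 0 < kbar φm φv γ ξ / u₀^4 := by positivity
  refine ⟨kbar φm φv γ ξ / u₀^4, by gcongr, ?_, ?_⟩
  · intro k hk hkk
    obtain ⟨u, hupos, huk⟩ := hu k hk
    rw [W_eq_welfare hφ hγ hξ hφ0 hk hupos huk, ← hPdef]
    refine mul_neg_of_pos_of_neg hC ?_
    rw [lt_div_iff₀ (by positivity), ← huk, mul_comm, mul_lt_mul_iff_left₀ hk] at hkk
    have hlt : u₀ < u := lt_of_pow_lt_pow_left₀ 4 hupos.le hkk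
    rcases le_total (√2) u with h | h
    · exact htail u h
    · rw [← hroot]
      exact hanti hu₀ ⟨hupos.le, h⟩ hlt
  · intro k hkk
    have hk : 0 < k := hk'pos.trans hkk
    obtain ⟨u, hupos, huk⟩ := hu k hk
    rw [W_eq_welfare hφ hγ hξ hφ0 hk hupos huk, ← hPdef]
    refine mul_pos hC ?_
    rw [div_lt_iff₀ (by positivity), ← huk, mul_comm k, mul_lt_mul_iff_left₀ hk] at hkk
    have hlt : u < u₀ := lt_of_pow_lt_pow_left₀ 4 hu₀.1 hkk
    rw [← hroot]
    exact hanti ⟨hupos.le, hlt.le.trans hu₀.2⟩ hu₀ hlt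

end
end

section
/- Over the square [φ_m, φ_v]², the function q = (q_i, q_c) ↦ τ_v(q) attains its maximum at (q_i, q_c) = (φ_m, φ_v) with maximum value γ(φ_v − φ_m)², and at this pair τ_m(φ_m, φ_v) = −γ(φ_v − φ_m)². Consequently, the pooling report r*(φ_m, φ_v) = min{ τ_v(φ_m, φ_v) + (1/2)√(ξ/k), 2τ_v(φ_m, φ_v) − τ_m(φ_m, φ_v) } equals min{ γ(φ_v − φ_m)² + (1/2)√(ξ/k), 3γ(φ_v − φ_m)² }, so that φ ≥ r*(φ_m, φ_v) if and only if φ ≥ min{ γ(φ_v − φ_m)² + (1/2)√(ξ/k), 3γ(φ_v − φ_m)² }. -/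
/-!
The voter's threshold is a difference of squared distances to the bliss point,
`τ_v(q) = γ ((φ_v - q_i)² - (φ_v - q_c)²)`. On the square `[φ_m, φ_v]²` the first square is at most
`(φ_v - φ_m)²` and the second is nonnegative, so the maximum is reached at `(φ_m, φ_v)`. The
remaining claims follow by evaluating `τ_v` and `τ_m` at that pair.
-/

open Real Set Filter

noncomputable section

/-- over [φ_m, φ_v]², τ_v attains its maximum at (φ_m, φ_v) with value
γ(φ_v − φ_m)², where τ_m(φ_m, φ_v) = −γ(φ_v − φ_m)²; hence the pooling report
r*(φ_m, φ_v) equals min{γ(φ_v − φ_m)² + (1/2)√(ξ/k), 3γ(φ_v − φ_m)²}, and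
φ ≥ r*(φ_m, φ_v) iff φ ≥ that minimum. -/
theorem stmt17 (φm φv γ ξ k φ : ℝ) (hφ : φm < φv) (hγ : 0 < γ) (hξ : 0 < ξ)
    (hk : 0 < k) (hΦ : 0 < φ) :
    (∀ qi ∈ Set.Icc φm φv, ∀ qc ∈ Set.Icc φm φv,
      tauV φv γ qi qc ≤ tauV φv γ φm φv) ∧
    tauV φv γ φm φv = γ*(φv - φm)^2 ∧
    tauM φm γ φm φv = -(γ*(φv - φm)^2) ∧
    (min (tauV φv γ φm φv + (1/2) * Real.sqrt (ξ/k))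
         (2 * tauV φv γ φm φv - tauM φm γ φm φv)
      = min (γ*(φv - φm)^2 + (1/2) * Real.sqrt (ξ/k)) (3*γ*(φv - φm)^2)) ∧
    (φ ≥ min (tauV φv γ φm φv + (1/2) * Real.sqrt (ξ/k))
             (2 * tauV φv γ φm φv - tauM φm γ φm φv) ↔
      φ ≥ min (γ*(φv - φm)^2 + (1/2) * Real.sqrt (ξ/k)) (3*γ*(φv - φm)^2)) := by
  have hV : tauV φv γ φm φv = γ*(φv - φm)^2 := by unfold tauV; ring
  have hM : tauM φm γ φm φv = -(γ*(φv - φm)^2) := by unfold tauM; ring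
  have hr : 2 * tauV φv γ φm φv - tauM φm γ φm φv = 3*γ*(φv - φm)^2 := by
    rw [hV, hM]; ring
  refine ⟨?_, hV, hM, by rw [hr, hV], by rw [hr, hV]⟩
  rintro qi ⟨hi, hi'⟩ qc -
  rw [hV]
  -- Completing the square: the voter's threshold is a difference of squared distances to `φv`.
  have h : tauV φv γ qi qc = γ * ((φv - qi)^2 - (φv - qc)^2) := by unfold tauV; ring
  rw [h]
  refine mul_le_mul_of_nonneg_left ?_ hγ.le
  have hsq : (φv - qi)^2 ≤ (φv - φm)^2 :=
    pow_le_pow_left₀ (sub_nonneg.mpr hi') (by linarith) 2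
  linarith [sq_nonneg (φv - qc)]

end
end

section
/- If k ≤ k̄/4, then V_R(φ_m, q_c) ≤ 0 for every q_c ∈ (φ_m, φ_v]; moreover V_R(φ_m, φ_v) ≤ 0 if and only if k ≤ k̄/4. (Hence when policies are proposed simultaneously, (φ_m, φ_m) is an equilibrium profile of the policy-making stage if and only if k ≤ k̄/4.) -/
/-!
Write `s = √(ξ/k)` and `G = γ(φ_v − φ_m)²`. The condition `k ≤ k̄/4` is equivalent to `2G ≤ s`
(`le_kbar_div_four_iff`). At `q_i = φ_m` the outlet's threshold `−γ(q_c − φ_m)²` is never positive,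
and the voter's threshold is at most its value `G` at `q_c = φ_v`; so if `2G ≤ s`, the first branch
`τ_v + s/2` of the minimum is at most `s` and the payoff is nonpositive. Conversely, at
`q_c = φ_v` the minimum is `min (G + s/2) (3G)`, which is at most `s` only if `2G ≤ s`
or `3G ≤ s`, and the latter implies the former.
-/

open Real Set Filter

noncomputable section

/-- The cost condition in terms of the cutoff `√(ξ/k)`: `k ≤ k̄/4` says exactly that
`2γ(φ_v − φ_m)² ≤ √(ξ/k)`. -/
lemma le_kbar_div_four_iff (φm φv γ ξ k : ℝ) (hφ : φm < φv) (hγ : 0 < γ) (hk : 0 < k) :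
    k ≤ kbar φm φv γ ξ / 4 ↔ 2 * (γ * (φv - φm)^2) ≤ Real.sqrt (ξ/k) := by
  have hD : 0 < φv - φm := sub_pos.mpr hφ
  have hpos : 0 < γ^2 * (φv - φm)^4 := by positivity
  have hpos2 : 0 < 2 * (γ * (φv - φm)^2) := by positivity
  rw [Real.le_sqrt' hpos2, le_div_iff₀ hk, kbar, le_div_iff₀ (by norm_num : (0:ℝ) < 4),
    le_div_iff₀ hpos]
  have h : (2 * (γ * (φv - φm)^2))^2 * k = k * 4 * (γ^2 * (φv - φm)^4) := by ring
  rw [h]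

/-- if k ≤ k̄/4 then V_R(φ_m, q_c) ≤ 0 for every q_c ∈ (φ_m, φ_v]; moreover
V_R(φ_m, φ_v) ≤ 0 iff k ≤ k̄/4. -/
theorem stmt18 (φm φv γ ξ k : ℝ) (hφ : φm < φv) (hγ : 0 < γ) (hξ : 0 < ξ) (hk : 0 < k) :
    (k ≤ kbar φm φv γ ξ / 4 →
      ∀ qc ∈ Set.Ioc φm φv, VR φm φv γ ξ k φm qc ≤ 0) ∧
    (VR φm φv γ ξ k φm φv ≤ 0 ↔ k ≤ kbar φm φv γ ξ / 4) := by
  rw [le_kbar_div_four_iff φm φv γ ξ k hφ hγ hk]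
  have hD : 0 < φv - φm := sub_pos.mpr hφ
  have hG : 0 < γ * (φv - φm)^2 := by positivity
  have upper : 2 * (γ * (φv - φm)^2) ≤ Real.sqrt (ξ/k) →
      ∀ qc ∈ Set.Ioc φm φv, VR φm φv γ ξ k φm qc ≤ 0 := by
    rintro h qc ⟨h1, -⟩
    -- `τ_v(φ_m, ·)` is maximal at `φ_v`: the gap is `γ(φ_v − q_c)²`.
    have hV : tauV φv γ φm qc ≤ γ * (φv - φm)^2 := by
      have : γ * (φv - φm)^2 - tauV φv γ φm qc = γ * (φv - qc)^2 := by
        unfold tauV; ring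
      have : 0 ≤ γ * (φv - qc)^2 := by positivity
      linarith
    have hM : tauM φm γ φm qc ≤ 0 := by
      have : tauM φm γ φm qc = -(γ * (qc - φm)^2) := by unfold tauM; ring
      have : 0 ≤ γ * (qc - φm)^2 := by positivity
      linarith
    refine max_le ?_ hM
    have := min_le_left (tauV φv γ φm qc + (1/2) * Real.sqrt (ξ/k))
      (2 * tauV φv γ φm qc - tauM φm γ φm qc)
    linarith
  refine ⟨upper, fun h => ?_, fun h => upper h φv ⟨hφ, le_rfl⟩⟩
  have hmin := (le_max_left _ _).trans h
  have hV : tauV φv γ φm φv = γ * (φv - φm)^2 := by unfold tauV; ring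
  have hM : tauM φm γ φm φv = -(γ * (φv - φm)^2) := by unfold tauM; ring
  rw [hV, hM, sub_nonpos, min_le_iff] at hmin
  rcases hmin with h | h <;> linarith

end
end
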